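/- arXiv:math-ph/0601020 — 2 statements merged into one kernel-verified Lean document; each statement's English description precedes it below -/
import Mathlib

section
/- For any n ∈ ℤ, any field F of characteristic 0, and any choice of a, a_+, a_−, a_{n+1}, a_{n−1}, a_k, b_k ∈ F (k ∈ ℤ, |k − n| ≥ 2) with a_{n+1}a_{n−1}(a_{n+1} − a_{n−1}) ≠ 0, setting b_{n±1} := 1/a_{n±1}, c_k := (a_k, b_k) and č_k := 1 − a_k b_k, the first Toeplitz vector field admits a formal Laurent solution (x(t), y(t)) over F in which only x_n(t) and y_n(t) have a (simple) pole, with expansions: (x_k(t), y_k(t)) = c_k + č_k(c_{k+1} − c_{k−1})t + O(t²) for |k − n| ≥ 2; x_{n±1}(t) = a_{n±1} + a_{n±1}a_± t + O(t²), y_{n±1}(t) = 1/a_{n±1} − (a_±/a_{n∓1})t + O(t²); x_n(t) = a_{n−1}a_{n+1}(1 + a·t)/((a_{n−1} − a_{n+1})t) + O(t) and y_n(t) = (−1 + (a + (a_{n+1}a_+ − a_{n−1}a_−)/(a_{n+1} − a_{n−1}))t)/((a_{n−1} − a_{n+1})t) + O(t). Moreover all higher coefficients of the solution are uniquely determined by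 these data. -/
/-!
Common definitions: the matrices `L₁`, `L₂` of the Toeplitz lattice, their powers,
the recursion polynomials `Γ_k` (here `GamA`), `Γ̃_k` (here `GamB`) and their
self-dual version (`GamSD`), together with the notion of formal Laurent
solutions of the (self-dual) Toeplitz lattice.
-/

noncomputable section

namespace SingConf

variable {A : Type*} [CommRing A]

/-- The entry `(L₁)_{ij} = -x_i y_{j-1} + δ_{i+1,j}` (for `j - i ≤ 1`, zero otherwise). -/
def L1e (x y : ℤ → A) (i j : ℤ) : A :=
  if j ≤ i + 1 then -(x i * y (j - 1)) + (if i + 1 = j then 1 else 0) else 0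

/-- The entry `(L₂)_{ij} = -y_j x_{i-1} + δ_{j+1,i}` (for `j - i ≥ -1`, zero otherwise). -/
def L2e (x y : ℤ → A) (i j : ℤ) : A :=
  if i ≤ j + 1 then -(y j * x (i - 1)) + (if j + 1 = i then 1 else 0) else 0

/-- The entry `(L₁^s)_{ij}`; the matrix `L₁` has upper bandwidth 1, so each entry of a
power is a finite sum. -/
def L1pow (x y : ℤ → A) : ℕ → ℤ → ℤ → A
  | 0 => fun i j => if i = j then 1 else 0
  | s + 1 => fun i j => ∑ l ∈ Finset.Icc (j - 1) (i + (s : ℤ)), L1pow x y s i l * L1e x y l j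

/-- The entry `(L₂^s)_{ij}`. -/
def L2pow (x y : ℤ → A) : ℕ → ℤ → ℤ → A
  | 0 => fun i j => if i = j then 1 else 0
  | s + 1 => fun i j => ∑ l ∈ Finset.Icc (i - (s : ℤ)) (j + 1), L2pow x y s i l * L2e x y l j

/-- The recursion polynomial
`Γ_k(x,y;u) = (v_k/y_k)(-(L₁P₁'(L₁))_{k+1,k+1} - (L₂P₂'(L₂))_{k,k}
              + (P₁'(L₁))_{k+1,k} + (P₂'(L₂))_{k,k+1}) + k x_k`
where `P₁(λ) = ∑_{i=1}^N u_i λ^i/i`, `P₂(λ) = ∑_{i=1}^N u_{-i} λ^i/i`, `v_k = 1 - x_k y_k`.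
The apparent denominator `y_k` cancels, thanks to the identities
`(L₁^{i-1})_{k+1,k} - (L₁^i)_{k+1,k+1} = y_k ∑_{l} x_l (L₁^{i-1})_{k+1,l}` and
`(L₂^{i-1})_{k,k+1} - (L₂^i)_{k,k} = y_k ∑_{l} x_{l-1} (L₂^{i-1})_{k,l}`,
which is how the cancellation-free expression below is obtained. -/
def GamA (N : ℕ) (u : ℤ → A) (x y : ℤ → A) (k : ℤ) : A :=
  (1 - x k * y k) *
    ((∑ i ∈ Finset.Icc 1 N, u (i : ℤ) *
        ∑ l ∈ Finset.Icc k (k + (i : ℤ)), x l * L1pow x y (i - 1) (k + 1) l) +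
      ∑ i ∈ Finset.Icc 1 N, u (-(i : ℤ)) *
        ∑ l ∈ Finset.Icc (k - (i : ℤ) + 1) (k + 1), x (l - 1) * L2pow x y (i - 1) k l) +
  (k : A) * x k

/-- The recursion polynomial
`Γ̃_k(x,y;u) = (v_k/x_k)(-(L₁P₁'(L₁))_{k,k} - (L₂P₂'(L₂))_{k+1,k+1}
              + (P₁'(L₁))_{k+1,k} + (P₂'(L₂))_{k,k+1}) + k y_k`,
written in cancellation-free form using
`(L₁^{i-1})_{k+1,k} - (L₁^i)_{k,k} = x_k ∑_{l} y_{l-1} (L₁^{i-1})_{l,k}` and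
`(L₂^{i-1})_{k,k+1} - (L₂^i)_{k+1,k+1} = x_k ∑_{l} y_l (L₂^{i-1})_{l,k+1}`. -/
def GamB (N : ℕ) (u : ℤ → A) (x y : ℤ → A) (k : ℤ) : A :=
  (1 - x k * y k) *
    ((∑ i ∈ Finset.Icc 1 N, u (i : ℤ) *
        ∑ l ∈ Finset.Icc (k - (i : ℤ) + 1) (k + 1), y (l - 1) * L1pow x y (i - 1) l k) +
      ∑ i ∈ Finset.Icc 1 N, u (-(i : ℤ)) *
        ∑ l ∈ Finset.Icc k (k + (i : ℤ)), y l * L2pow x y (i - 1) l (k + 1)) +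
  (k : A) * y k

/-- The self-dual recursion polynomial
`Γ_k(x;u) = (v_k/x_k)(2(P'(L))_{k+1,k} - (LP'(L))_{k+1,k+1} - (LP'(L))_{k,k}) + k x_k`
(where `L = L₁` with `y = x`, `v_k = 1 - x_k²`), in cancellation-free form. -/
def GamSD (N : ℕ) (u : ℕ → A) (x : ℤ → A) (k : ℤ) : A :=
  (1 - x k * x k) *
    (∑ i ∈ Finset.Icc 1 N, u i *
      ((∑ l ∈ Finset.Icc k (k + (i : ℤ)), x l * L1pow x x (i - 1) (k + 1) l) +
        ∑ l ∈ Finset.Icc (k - (i : ℤ) + 1) (k + 1), x (l - 1) * L1pow x x (i - 1) l k)) +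
  (k : A) * x k

variable {K : Type*} [Field K]

/-- `f(t) = O(t^m)` for a formal Laurent series. -/
def BigO (f : LaurentSeries K) (m : ℤ) : Prop := ∀ i < m, f.coeff i = 0

/-- A family `x(t) = (x_k(t))_{k ∈ ℤ}` of formal Laurent series is a solution of the first
vector field of the self-dual Toeplitz lattice: `dx_k/dt = (1 - x_k²)(x_{k+1} - x_{k-1})`;
stated coefficientwise (the coefficient of `t^m` in `dx_k/dt` is `(m+1)·x_k^{(m+1)}`). -/
def IsSolSD (x : ℤ → LaurentSeries K) : Prop :=
  ∀ k m : ℤ, ((m + 1 : ℤ) : K) * (x k).coeff (m + 1) =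
    ((1 - x k * x k) * (x (k + 1) - x (k - 1))).coeff m

/-- A family `(x_k(t), y_k(t))_{k ∈ ℤ}` of formal Laurent series is a solution of the first
Toeplitz vector field: `dx_k/dt = (1 - x_k y_k)(x_{k+1} - x_{k-1})`,
`dy_k/dt = (1 - x_k y_k)(y_{k+1} - y_{k-1})`. -/
def IsSolT (x y : ℤ → LaurentSeries K) : Prop :=
  ∀ k m : ℤ,
    ((m + 1 : ℤ) : K) * (x k).coeff (m + 1) =
      ((1 - x k * y k) * (x (k + 1) - x (k - 1))).coeff m ∧
    ((m + 1 : ℤ) : K) * (y k).coeff (m + 1) =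
      ((1 - x k * y k) * (y (k + 1) - y (k - 1))).coeff m

end SingConf

open SingConf

/-!
Writing `x_k = t ^ (-e_k) X_k`, `y_k = t ^ (-e_k) Y_k` with `e_n = 1` and `e_k = 0` otherwise, and
multiplying the equations at the site `k` by `t ^ (e_k + 1)`, turns the lattice into a system of
power series equations with a regular singularity at `t = 0`. Changing `(X, Y)` at order `t ^ m`
changes the coefficient of order `m` in the equations by a linear map, the indicial map. Given the
leading balance, this map is triangular with respect to the sites: it splits into `2 × 2` blocks at
the sites `k ≠ n`, with determinant `m (m - 1)` at `k = n ± 1` and `m ^ 2` elsewhere, followed by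
one at `n`, with determinant `m ^ 2 - 1`. It is therefore bijective for all `m ≥ 2`, so that every
solution modulo `t ^ 2` extends uniquely. At the resonance `m = 1` each of the three blocks at
`n`, `n + 1`, `n - 1` has rank one and the equations are compatible, which leaves the three free
parameters `a`, `a₊`, `a₋`.
-/

namespace SingConf

open PowerSeries

section Indicial

variable {R : Type*} [CommRing R] {ι : Type*}

lemma X_pow_succ_dvd_X_pow_mul_iff {m : ℕ} {f : R⟦X⟧} :
    X ^ (m + 1) ∣ X ^ m * f ↔ constantCoeff f = 0 := by
  rw [← X_dvd_iff, pow_succ]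
  refine ⟨fun ⟨g, hg⟩ => ⟨g, X_pow_mul_cancel (k := m) ?_⟩, mul_dvd_mul_left _⟩
  rw [hg, mul_assoc]

lemma eq_of_forall_X_pow_dvd_sub {f g : R⟦X⟧} {N : ℕ} (h : ∀ m, N ≤ m → X ^ m ∣ f - g) :
    f = g := by
  ext m
  have := X_pow_dvd_iff.mp (h (N + m + 1) (by omega)) m (by omega)
  rwa [map_sub, sub_eq_zero] at this

lemma exists_forall_X_pow_dvd_sub {N : ℕ} {f : ℕ → R⟦X⟧}
    (hf : ∀ j, X ^ (N + j) ∣ f (j + 1) - f j) : ∃ g, ∀ j, X ^ (N + j) ∣ g - f j := by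
  have cauchy : ∀ j l, j ≤ l → X ^ (N + j) ∣ f l - f j := by
    intro j l hjl
    induction l, hjl using Nat.le_induction with
    | base => simp
    | succ l hjl ih =>
      simpa using dvd_add ((pow_dvd_pow X (by omega)).trans (hf l)) ih
  refine ⟨mk fun i => coeff i (f (i + 1)), fun j => X_pow_dvd_iff.mpr fun i hi => ?_⟩
  rw [map_sub, coeff_mk, sub_eq_zero]
  rcases le_total j (i + 1) with hj | hj
  · simpa [sub_eq_zero] using X_pow_dvd_iff.mp (cauchy j (i + 1) hj) i hi
  · have := X_pow_dvd_iff.mp (cauchy (i + 1) j hj) i (by omega)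
    rw [map_sub, sub_eq_zero] at this
    exact this.symm

/-- Perturbing the argument of `E` at order `m ≥ N` changes the coefficient of order `m` of `E z`
by the indicial map `L m` and changes no lower coefficient, for all `z ≡ z₀ (mod X ^ N)`.
The zeros of `E` are then computed one coefficient at a time, by inverting the maps `L m`. -/
def HasIndicialMaps (E : (ι → R⟦X⟧) → ι → R⟦X⟧) (L : ℕ → (ι → R) → ι → R)
    (z₀ : ι → R⟦X⟧) (N : ℕ) : Prop :=
  ∀ m, N ≤ m → ∀ z w : ι → R⟦X⟧, (∀ i, X ^ N ∣ z i - z₀ i) → ∀ i,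
    X ^ (m + 1) ∣ E (z + (X : R⟦X⟧) ^ m • w) i - E z i
      - X ^ m * C (L m (fun j => constantCoeff (w j)) i)

namespace HasIndicialMaps

variable {E : (ι → R⟦X⟧) → ι → R⟦X⟧} {L : ℕ → (ι → R) → ι → R} {z₀ z z' : ι → R⟦X⟧} {N m : ℕ}

lemma X_pow_dvd_sub (hE : HasIndicialMaps E L z₀ N) (hm : N ≤ m) (hz : ∀ i, X ^ N ∣ z i - z₀ i)
    (hzz' : ∀ i, X ^ m ∣ z' i - z i) (i : ι) : X ^ m ∣ E z' i - E z i := by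
  choose w hw using hzz'
  obtain rfl : z' = z + (X : R⟦X⟧) ^ m • w := funext fun i => by simp [← hw]
  exact (dvd_sub_left (dvd_mul_right _ _)).mp
    ((pow_dvd_pow X m.le_succ).trans (hE m hm z w hz i))

lemma X_pow_succ_dvd_sub (hE : HasIndicialMaps E L z₀ N) (hL : Function.Injective (L m))
    (hm : N ≤ m) (hz : ∀ i, X ^ N ∣ z i - z₀ i) (hEz : ∀ i, E z i = 0) (hEz' : ∀ i, E z' i = 0)
    (hzz' : ∀ i, X ^ m ∣ z' i - z i) (i : ι) : X ^ (m + 1) ∣ z' i - z i := by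
  have indicial_eq_zero : ∀ w : ι → R⟦X⟧, (∀ i, E (z + (X : R⟦X⟧) ^ m • w) i = 0) →
      L m (fun j => constantCoeff (w j)) = 0 := fun w hw => funext fun j => by
    have := hE m hm z w hz j
    rwa [hw, hEz, sub_zero, zero_sub, dvd_neg, X_pow_succ_dvd_X_pow_mul_iff,
      constantCoeff_C] at this
  choose w hw using hzz'
  obtain rfl : z' = z + (X : R⟦X⟧) ^ m • w := funext fun i => by simp [← hw]
  have hw0 : (fun j => constantCoeff (w j)) = fun j => constantCoeff ((0 : ι → R⟦X⟧) j) :=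
    hL ((indicial_eq_zero w hEz').trans (indicial_eq_zero 0 (by simpa using hEz)).symm)
  rw [hw, X_pow_succ_dvd_X_pow_mul_iff]
  simpa using congrFun hw0 i

lemma exists_X_pow_succ_dvd (hE : HasIndicialMaps E L z₀ N) (hL : Function.Surjective (L m))
    (hm : N ≤ m) (hz : ∀ i, X ^ N ∣ z i - z₀ i) (hEz : ∀ i, X ^ m ∣ E z i) :
    ∃ z' : ι → R⟦X⟧, (∀ i, X ^ m ∣ z' i - z i) ∧ ∀ i, X ^ (m + 1) ∣ E z' i := by
  choose r hr using hEz
  obtain ⟨c, hc⟩ := hL fun i => -constantCoeff (r i)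
  refine ⟨z + (X : R⟦X⟧) ^ m • fun i => C (c i), fun i => by simp, fun i => ?_⟩
  have step := hE m hm z (fun i => C (c i)) hz i
  have cancel : X ^ (m + 1) ∣ E z i + X ^ m * C (L m c i) := by
    rw [hr, ← mul_add, X_pow_succ_dvd_X_pow_mul_iff]
    simp [hc]
  simpa [sub_sub] using dvd_add step cancel

lemma exists_eq_zero (hE : HasIndicialMaps E L z₀ N)
    (hL : ∀ m, N ≤ m → Function.Surjective (L m)) (h₀ : ∀ i, X ^ N ∣ E z₀ i) :
    ∃ z : ι → R⟦X⟧, (∀ i, X ^ N ∣ z i - z₀ i) ∧ ∀ i, E z i = 0 := by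
  choose! next next_sub next_dvd using fun m hm (z : ι → R⟦X⟧) =>
    hE.exists_X_pow_succ_dvd (z := z) (hL m hm) hm
  let approx : ℕ → ι → R⟦X⟧ := Nat.rec z₀ fun j z => next (N + j) z
  have approx_spec : ∀ j, (∀ i, X ^ N ∣ approx j i - z₀ i) ∧ ∀ i, X ^ (N + j) ∣ E (approx j) i := by
    intro j
    induction j with
    | zero => exact ⟨fun i => by simp [approx], h₀⟩
    | succ j ih =>
      have hsub := next_sub (N + j) (by omega) (approx j) ih.1 ih.2
      refine ⟨fun i => ?_, next_dvd (N + j) (by omega) (approx j) ih.1 ih.2⟩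
      simpa using dvd_add ((pow_dvd_pow X (by omega)).trans (hsub i)) (ih.1 i)
  choose z hz using fun i => exists_forall_X_pow_dvd_sub (N := N) (f := fun j => approx j i)
    fun j => next_sub (N + j) (by omega) (approx j) (approx_spec j).1 (approx_spec j).2 i
  refine ⟨z, fun i => hz i 0, fun i => eq_of_forall_X_pow_dvd_sub (N := N) fun m hm => ?_⟩
  obtain ⟨j, rfl⟩ := Nat.exists_eq_add_of_le hm
  have := hE.X_pow_dvd_sub hm (approx_spec j).1 (fun i => hz i j) i
  simpa using dvd_add this ((approx_spec j).2 i)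

theorem existsUnique_eq_zero (hE : HasIndicialMaps E L z₀ N)
    (hL : ∀ m, N ≤ m → Function.Bijective (L m)) (h₀ : ∀ i, X ^ N ∣ E z₀ i) :
    ∃! z : ι → R⟦X⟧, (∀ i, X ^ N ∣ z i - z₀ i) ∧ ∀ i, E z i = 0 := by
  obtain ⟨z, hz, hEz⟩ := hE.exists_eq_zero (fun m hm => (hL m hm).2) h₀
  refine ⟨z, ⟨hz, hEz⟩, fun z' ⟨hz', hEz'⟩ => ?_⟩
  have agree : ∀ m, N ≤ m → ∀ i, X ^ m ∣ z' i - z i := by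
    intro m hm
    induction m, hm using Nat.le_induction with
    | base => exact fun i => by simpa using dvd_sub (hz' i) (hz i)
    | succ m hm ih => exact hE.X_pow_succ_dvd_sub (hL m hm).1 hm hz hEz hEz' ih
  exact funext fun i => eq_of_forall_X_pow_dvd_sub fun m hm => agree m hm i

end HasIndicialMaps

end Indicial

section Lattice

variable {R : Type*} [CommRing R]

/-- The difference `z (k + 1) / t ^ e (k + 1) - z (k - 1) / t ^ e (k - 1)` multiplied by
`t ^ (1 - e k)`. It has this meaning for pole orders with `e k + e (k + 1) ≤ 1`, for which the
subtractions of exponents are not truncated. -/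
def scaledDiff (e : ℤ → ℕ) (t : R) (z : ℤ → R) (k : ℤ) : R :=
  t ^ (1 - e k - e (k + 1)) * z (k + 1) - t ^ (1 - e k - e (k - 1)) * z (k - 1)

/-- The lattice equation at the site `k` for functions with poles of order `e k`: with
`ξ k = x k / t ^ e k`, and `η`, `ζ` likewise obtained from `y`, `z`, this is
`dζ_k/dt - (1 - ξ_k η_k) (ζ_{k+1} - ζ_{k-1})` multiplied by `t ^ (e k + 1)`. The two equations at
`k` are the cases `z = x` and `z = y`. -/
def residual (e : ℤ → ℕ) (x y z : ℤ → R⟦X⟧) (k : ℤ) : R⟦X⟧ :=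
  X * d⁄dX R (z k) - (e k : R⟦X⟧) * z k - (X ^ (2 * e k) - x k * y k) * scaledDiff e X z k

/-- The change of the coefficient of order `m` in `residual e` at the site `k` when series with
constant terms `x`, `y`, `z` are perturbed by `t ^ m` times series with constant terms `u`, `v`,
`w`. -/
def indicial (e : ℤ → ℕ) (m : ℕ) (x y z u v w : ℤ → R) (k : ℤ) : R :=
  ((m : R) - e k) * w k + (x k * v k + u k * y k) * scaledDiff e 0 z k
    - (0 ^ (2 * e k) - x k * y k) * scaledDiff e 0 w k

lemma constantCoeff_scaledDiff (e : ℤ → ℕ) (z : ℤ → R⟦X⟧) (k : ℤ) :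
    constantCoeff (scaledDiff e X z k) = scaledDiff e 0 (fun j => constantCoeff (z j)) k := by
  simp [scaledDiff]

lemma X_mul_derivative_X_pow_mul (m : ℕ) (f : R⟦X⟧) :
    X * d⁄dX R (X ^ m * f) = X ^ m * ((m : R⟦X⟧) * f + X * d⁄dX R f) := by
  rcases m with _ | m
  · simp
  · simp [Derivation.leibniz]; ring

lemma X_pow_succ_dvd_residual_sub (e : ℤ → ℕ) {m : ℕ} (hm : m ≠ 0) (x y z u v w : ℤ → R⟦X⟧)
    (k : ℤ) :
    X ^ (m + 1) ∣ residual e (x + (X : R⟦X⟧) ^ m • u) (y + (X : R⟦X⟧) ^ m • v)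
        (z + (X : R⟦X⟧) ^ m • w) k - residual e x y z k
      - X ^ m * C (indicial e m (fun j => constantCoeff (x j)) (fun j => constantCoeff (y j))
          (fun j => constantCoeff (z j)) (fun j => constantCoeff (u j))
          (fun j => constantCoeff (v j)) (fun j => constantCoeff (w j)) k) := by
  have scaledDiff_add : scaledDiff e X (z + (X : R⟦X⟧) ^ m • w) k =
      scaledDiff e X z k + X ^ m * scaledDiff e X w k := by
    simp only [scaledDiff, Pi.add_apply, Pi.smul_apply, smul_eq_mul]; ring
  have expand : residual e (x + (X : R⟦X⟧) ^ m • u) (y + (X : R⟦X⟧) ^ m • v)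
      (z + (X : R⟦X⟧) ^ m • w) k - residual e x y z k = X ^ m * ((m : R⟦X⟧) * w k + X * d⁄dX R (w k)
        - (e k : R⟦X⟧) * w k + (x k * v k + u k * y k) * scaledDiff e X z k
        - (X ^ (2 * e k) - x k * y k) * scaledDiff e X w k
        + X ^ m * (u k * v k * (scaledDiff e X z k + X ^ m * scaledDiff e X w k)
          + (x k * v k + u k * y k) * scaledDiff e X w k)) := by
    simp only [residual, scaledDiff_add, Pi.add_apply, Pi.smul_apply, smul_eq_mul, map_add,
      mul_add X, X_mul_derivative_X_pow_mul]
    ring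
  rw [expand, ← mul_sub, X_pow_succ_dvd_X_pow_mul_iff]
  simp only [indicial, map_sub, map_add, map_mul, map_pow, map_natCast, constantCoeff_X,
    constantCoeff_C, constantCoeff_scaledDiff, zero_pow hm]
  ring

/-- The left-hand sides of the whole system, as a function of `x` (indices `Sum.inl k`) and `y`
(indices `Sum.inr k`) jointly. -/
def systemResidual (e : ℤ → ℕ) (z : ℤ ⊕ ℤ → R⟦X⟧) : ℤ ⊕ ℤ → R⟦X⟧ :=
  Sum.elim (residual e (z ∘ .inl) (z ∘ .inr) (z ∘ .inl))
    (residual e (z ∘ .inl) (z ∘ .inr) (z ∘ .inr))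

/-- The indicial map of order `m` of `systemResidual e` at the constant terms `x`, `y`. -/
def systemIndicial (e : ℤ → ℕ) (x y : ℤ → R) (m : ℕ) (c : ℤ ⊕ ℤ → R) : ℤ ⊕ ℤ → R :=
  Sum.elim (indicial e m x y x (c ∘ .inl) (c ∘ .inr) (c ∘ .inl))
    (indicial e m x y y (c ∘ .inl) (c ∘ .inr) (c ∘ .inr))

lemma constantCoeff_eq_of_X_pow_dvd_sub {N : ℕ} (hN : N ≠ 0) {f g : R⟦X⟧} (h : X ^ N ∣ f - g) :
    constantCoeff f = constantCoeff g := by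
  rw [← sub_eq_zero, ← map_sub, ← X_dvd_iff]
  exact (dvd_pow_self X hN).trans h

lemma hasIndicialMaps_systemResidual (e : ℤ → ℕ) {N : ℕ} (hN : N ≠ 0) (z₀ : ℤ ⊕ ℤ → R⟦X⟧) :
    HasIndicialMaps (systemResidual e) (systemIndicial e (fun k => constantCoeff (z₀ (.inl k)))
      fun k => constantCoeff (z₀ (.inr k))) z₀ N := by
  intro m hm z w hz i
  simp only [← fun i => constantCoeff_eq_of_X_pow_dvd_sub hN (hz i)]
  rcases i with k | k
  · exact X_pow_succ_dvd_residual_sub e (by omega) (z ∘ .inl) (z ∘ .inr) (z ∘ .inl)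
      (w ∘ .inl) (w ∘ .inr) (w ∘ .inl) k
  · exact X_pow_succ_dvd_residual_sub e (by omega) (z ∘ .inl) (z ∘ .inr) (z ∘ .inr)
      (w ∘ .inl) (w ∘ .inr) (w ∘ .inr) k

end Lattice

section Laurent

variable {K : Type*} [Field K]

/-- The Laurent series `x k / t ^ e k`. -/
def withPoles (e : ℤ → ℕ) (x : ℤ → K⟦X⟧) (k : ℤ) : LaurentSeries K :=
  (x k : LaurentSeries K) / ((X : K⟦X⟧) : LaurentSeries K) ^ e k

lemma coe_X_ne_zero : ((X : K⟦X⟧) : LaurentSeries K) ≠ 0 := by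
  simp

lemma coeff_mul_X_pow (f : LaurentSeries K) (m : ℕ) (i : ℤ) :
    (f * ((X : K⟦X⟧) : LaurentSeries K) ^ m).coeff i = f.coeff (i - m) := by
  rw [coe_X, ← RatFunc.single_one_eq_pow]
  simp [HahnSeries.coeff_mul_single]

lemma coeff_div_X_pow (f : LaurentSeries K) (m : ℕ) (i : ℤ) :
    (f / ((X : K⟦X⟧) : LaurentSeries K) ^ m).coeff i = f.coeff (i + m) := by
  have := coeff_mul_X_pow (f / ((X : K⟦X⟧) : LaurentSeries K) ^ m) m (i + m)
  rwa [div_mul_cancel₀ _ (pow_ne_zero _ coe_X_ne_zero), add_sub_cancel_right, eq_comm] at this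

lemma bigO_zero_iff {f : LaurentSeries K} :
    BigO f 0 ↔ ∃ g : K⟦X⟧, f = (g : LaurentSeries K) := by
  constructor
  · refine fun h => ⟨mk fun m => f.coeff m, ?_⟩
    ext i
    rw [coeff_coe]
    split_ifs with hi
    · exact h i hi
    · rw [coeff_mk, Int.natAbs_of_nonneg (not_lt.mp hi)]
  · rintro ⟨g, rfl⟩ i hi
    rw [coeff_coe, if_pos hi]

lemma bigO_neg_iff {f : LaurentSeries K} {m : ℕ} :
    BigO f (-m) ↔ ∃ g : K⟦X⟧, f = (g : LaurentSeries K) / ((X : K⟦X⟧) : LaurentSeries K) ^ m := by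
  simp only [eq_div_iff (pow_ne_zero m (coe_X_ne_zero (K := K))), ← bigO_zero_iff, BigO,
    coeff_mul_X_pow]
  exact ⟨fun h i hi => h _ (by omega), fun h i hi => by simpa using h (i + m) (by omega)⟩

lemma forall_bigO_iff {e : ℤ → ℕ} {x : ℤ → LaurentSeries K} :
    (∀ k, BigO (x k) (-e k)) ↔ ∃ g : ℤ → K⟦X⟧, x = withPoles e g := by
  simp only [bigO_neg_iff, funext_iff, withPoles, Classical.skolem]

lemma coeff_coe_X_mul_derivative (f : K⟦X⟧) (j : ℤ) :
    ((X * d⁄dX K f : K⟦X⟧) : LaurentSeries K).coeff j =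
      (j : K) * (f : LaurentSeries K).coeff j := by
  rw [coeff_coe, coeff_coe]
  split_ifs with hj
  · simp
  · obtain ⟨j, rfl⟩ := Int.eq_ofNat_of_zero_le (not_lt.mp hj)
    rw [Int.natAbs_natCast, Int.cast_natCast]
    rcases j with _ | j
    · simp
    · rw [coeff_succ_X_mul, coeff_derivative, mul_comm, Nat.cast_succ]

lemma X_mul_derivative_sub_eq_zero_iff {f g : K⟦X⟧} {m : ℕ} {h : LaurentSeries K}
    (hg : h * ((X : K⟦X⟧) : LaurentSeries K) ^ (m + 1) = (g : LaurentSeries K)) :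
    X * d⁄dX K f - (m : K⟦X⟧) * f - g = 0 ↔ ∀ i : ℤ, ((i + 1 : ℤ) : K) *
      ((f : LaurentSeries K) / ((X : K⟦X⟧) : LaurentSeries K) ^ m).coeff (i + 1) = h.coeff i := by
  have coeff_sub (j : ℤ) : ((X * d⁄dX K f - (m : K⟦X⟧) * f - g : K⟦X⟧) : LaurentSeries K).coeff j =
      ((j : K) - m) * (f : LaurentSeries K).coeff j - h.coeff (j - (m + 1)) := by
    rw [coe_sub, coe_sub, HahnSeries.coeff_sub, HahnSeries.coeff_sub, coeff_coe_X_mul_derivative,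
      ← hg, coeff_mul_X_pow, ← nsmul_eq_mul, map_nsmul, HahnSeries.coeff_smul,
      nsmul_eq_mul, Nat.cast_succ, sub_mul]
  rw [← (HahnSeries.ofPowerSeries_injective (Γ := ℤ) (R := K)).eq_iff, map_zero,
    HahnSeries.ext_iff, funext_iff]
  simp only [coeff_sub, coeff_div_X_pow, HahnSeries.coeff_zero, sub_eq_zero]
  rw [← (Equiv.addRight ((m : ℤ) + 1)).forall_congr_right]
  refine forall_congr' fun i => ?_
  have hi : ((i + (m + 1) : ℤ) : K) - m = (i + 1 : ℤ) := by push_cast; ring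
  rw [Equiv.coe_addRight, add_sub_cancel_right, hi, add_right_comm i 1, add_assoc]

lemma coe_scaledDiff {e : ℤ → ℕ} (he : ∀ k, e k + e (k + 1) ≤ 1) (z : ℤ → K⟦X⟧) (k : ℤ) :
    ((scaledDiff e X z k : K⟦X⟧) : LaurentSeries K) =
      (withPoles e z (k + 1) - withPoles e z (k - 1)) *
        ((X : K⟦X⟧) : LaurentSeries K) ^ (1 - e k) := by
  have div_mul (l : ℤ) (hl : e k + e l ≤ 1) :
      withPoles e z l * ((X : K⟦X⟧) : LaurentSeries K) ^ (1 - e k) =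
        ((X : K⟦X⟧) : LaurentSeries K) ^ (1 - e k - e l) * (z l : LaurentSeries K) := by
    obtain ⟨r, hr⟩ : ∃ r, 1 - e k = r + e l := ⟨1 - e k - e l, by omega⟩
    rw [hr, Nat.add_sub_cancel, withPoles, pow_add]
    field_simp [coe_X_ne_zero]
  have hpred : e k + e (k - 1) ≤ 1 := by simpa [add_comm] using he (k - 1)
  rw [sub_mul, div_mul _ (he k), div_mul _ hpred]
  simp [scaledDiff]

theorem isSolT_withPoles_iff {e : ℤ → ℕ} (he : ∀ k, e k + e (k + 1) ≤ 1) {x y : ℤ → K⟦X⟧} :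
    IsSolT (withPoles e x) (withPoles e y) ↔ ∀ i, systemResidual e (Sum.elim x y) i = 0 := by
  have hg (z : ℤ → K⟦X⟧) (k : ℤ) : (1 - withPoles e x k * withPoles e y k) *
      (withPoles e z (k + 1) - withPoles e z (k - 1)) * ((X : K⟦X⟧) : LaurentSeries K) ^ (e k + 1) =
        (((X ^ (2 * e k) - x k * y k) * scaledDiff e X z k : K⟦X⟧) : LaurentSeries K) := by
    have hek : e k + 1 = 2 * e k + (1 - e k) := by have := he k; omega
    rw [coe_mul, coe_sub, coe_pow, coe_mul, coe_scaledDiff he, hek, pow_add, pow_mul',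
      withPoles, withPoles]
    field_simp [coe_X_ne_zero]
  have residual_iff (z : ℤ → K⟦X⟧) (k : ℤ) := X_mul_derivative_sub_eq_zero_iff (f := z k) (hg z k)
  simp only [Sum.forall, systemResidual, Sum.elim_inl, Sum.elim_inr, Sum.elim_comp_inl,
    Sum.elim_comp_inr, residual, residual_iff, IsSolT, forall_and]
  rfl

end Laurent

section LeadingBalance

variable {R : Type*} [CommRing R] {n : ℤ}

lemma two_le_abs_sub_or (k n : ℤ) : 2 ≤ |k - n| ∨ k = n ∨ k = n + 1 ∨ k = n - 1 := by
  grind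

lemma forall_site_iff {P : ℤ → Prop} :
    (∀ k, P k) ↔ (∀ k, 2 ≤ |k - n| → P k) ∧ P n ∧ P (n + 1) ∧ P (n - 1) := by
  refine ⟨fun h => ⟨fun k _ => h k, h _, h _, h _⟩, fun ⟨far, self, succ, pred⟩ k => ?_⟩
  rcases two_le_abs_sub_or k n with hk | rfl | rfl | rfl
  exacts [far k hk, self, succ, pred]

lemma ne_of_two_le_abs_sub {k : ℤ} (hk : 2 ≤ |k - n|) : k ≠ n ∧ k + 1 ≠ n ∧ k - 1 ≠ n := by
  refine ⟨?_, ?_, ?_⟩ <;> rintro rfl <;> simp at hk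

lemma scaledDiff_single_of_two_le (t : R) (z : ℤ → R) {k : ℤ} (hk : 2 ≤ |k - n|) :
    scaledDiff (Pi.single n 1) t z k = t * (z (k + 1) - z (k - 1)) := by
  obtain ⟨hself, hsucc, hpred⟩ := ne_of_two_le_abs_sub hk
  simp [scaledDiff, hself, hsucc, hpred, mul_sub]

lemma scaledDiff_single_self (t : R) (z : ℤ → R) :
    scaledDiff (Pi.single n 1) t z n = z (n + 1) - z (n - 1) := by
  simp [scaledDiff]

lemma scaledDiff_single_add_one (t : R) (z : ℤ → R) :
    scaledDiff (Pi.single n 1) t z (n + 1) = t * z (n + 2) - z n := by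
  have h : n + 1 + 1 = n + 2 := by ring
  simp [scaledDiff, h]

lemma scaledDiff_single_sub_one (t : R) (z : ℤ → R) :
    scaledDiff (Pi.single n 1) t z (n - 1) = z n - t * z (n - 2) := by
  have h : n - 1 - 1 = n - 2 := by ring
  simp [scaledDiff, h]

/-- The coefficients of lowest order of a solution whose only poles are simple poles of `x n` and
`y n` satisfy these relations, which the terms of order `t⁻¹` at the sites `n ± 1` and of order
`t⁻²` at the site `n` of the lattice equations impose. -/
structure IsLeadingBalance (n : ℤ) (x y : ℤ → R) : Prop where
  succ : x (n + 1) * y (n + 1) = 1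
  pred : x (n - 1) * y (n - 1) = 1
  x_pole : x n * (y (n + 1) - y (n - 1)) = 1
  y_pole : y n * (x (n + 1) - x (n - 1)) = 1

variable {x y z u v w : ℤ → R} {m : ℕ}

lemma indicial_of_two_le {k : ℤ} (hk : 2 ≤ |k - n|) :
    indicial (Pi.single n 1) m x y z u v w k = m * w k := by
  simp [indicial, scaledDiff_single_of_two_le _ _ hk, (ne_of_two_le_abs_sub hk).1]

lemma indicial_self :
    indicial (Pi.single n 1) m x y z u v w n = (m - 1) * w n
      + (x n * v n + u n * y n) * (z (n + 1) - z (n - 1))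
      + x n * y n * (w (n + 1) - w (n - 1)) := by
  simp [indicial, scaledDiff_single_self]

namespace IsLeadingBalance

lemma indicial_add_one (h : IsLeadingBalance n x y) :
    indicial (Pi.single n 1) m x y z u v w (n + 1) =
      m * w (n + 1) - (x (n + 1) * v (n + 1) + u (n + 1) * y (n + 1)) * z n := by
  simp [indicial, scaledDiff_single_add_one, h.succ, sub_eq_add_neg]

lemma indicial_sub_one (h : IsLeadingBalance n x y) :
    indicial (Pi.single n 1) m x y z u v w (n - 1) =
      m * w (n - 1) + (x (n - 1) * v (n - 1) + u (n - 1) * y (n - 1)) * z n := by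
  simp [indicial, scaledDiff_single_sub_one, h.pred]

lemma add_one_mul_add_mul (h : IsLeadingBalance n x y) :
    y (n + 1) * x n + x (n + 1) * y n = 1 := by
  linear_combination (x n * (y (n + 1) - y (n - 1)) - y (n + 1) * x n) * h.y_pole +
    (1 - x (n + 1) * y n) * h.x_pole + x n * y n * (h.succ - h.pred)

lemma sub_one_mul_add_mul (h : IsLeadingBalance n x y) :
    y (n - 1) * x n + x (n - 1) * y n = -1 := by
  linear_combination h.add_one_mul_add_mul - h.x_pole - h.y_pole

lemma x_eq (h : IsLeadingBalance n x y) : x n * y n * (x (n + 1) - x (n - 1)) = x n := by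
  rw [mul_assoc, h.y_pole, mul_one]

lemma y_eq (h : IsLeadingBalance n x y) : x n * y n * (y (n + 1) - y (n - 1)) = y n := by
  rw [mul_right_comm, h.x_pole, one_mul]

variable [Nontrivial R]

lemma x_ne_zero (h : IsLeadingBalance n x y) : x n ≠ 0 := left_ne_zero_of_mul_eq_one h.x_pole

lemma y_ne_zero (h : IsLeadingBalance n x y) : y n ≠ 0 := left_ne_zero_of_mul_eq_one h.y_pole

end IsLeadingBalance

end LeadingBalance

section Bijectivity

variable {F : Type*} [Field F] {n : ℤ} {x y u v : ℤ → F} {m : ℕ}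

lemma exists_neighbor_system_iff {c p q X Y : F} (hc : c ≠ 0) (hc' : c - 1 ≠ 0)
    (h : q * X + p * Y = 1) (f g : F) : ∃ u₀ v₀ : F, ∀ u v : F,
      c * u - (p * v + u * q) * X = f ∧ c * v - (p * v + u * q) * Y = g ↔ u = u₀ ∧ v = v₀ := by
  refine ⟨(f + (p * g + q * f) / (c - 1) * X) / c, (g + (p * g + q * f) / (c - 1) * Y) / c,
    fun u v => ?_⟩
  rw [eq_div_iff hc, eq_div_iff hc]
  constructor
  · rintro ⟨hf, hg⟩
    have hsum : (p * g + q * f) / (c - 1) = p * v + u * q := by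
      rw [div_eq_iff hc']
      linear_combination -p * hg - q * hf - (p * v + u * q) * h
    rw [hsum]
    exact ⟨by linear_combination hf, by linear_combination hg⟩
  · rintro ⟨hu, hv⟩
    have hsum : p * v + u * q = (p * g + q * f) / (c - 1) := by
      refine mul_left_cancel₀ hc ?_
      linear_combination p * hv + q * hu + (p * g + q * f) / (c - 1) * h
        - div_mul_cancel₀ (p * g + q * f) hc'
    rw [hsum]
    exact ⟨by linear_combination hu, by linear_combination hv⟩

lemma exists_pole_system_iff {c r : F} (hr : r ≠ 0) (hc : c - 1 ≠ 0) (hc' : c + 1 ≠ 0)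
    (f g : F) : ∃ u₀ v₀ : F, ∀ u v : F,
      c * u + r * v = f ∧ c * v + r⁻¹ * u = g ↔ u = u₀ ∧ v = v₀ := by
  refine ⟨(c * f - r * g) / ((c - 1) * (c + 1)), (c * g - r⁻¹ * f) / ((c - 1) * (c + 1)),
    fun u v => ?_⟩
  rw [eq_div_iff (mul_ne_zero hc hc'), eq_div_iff (mul_ne_zero hc hc')]
  constructor
  · rintro ⟨rfl, rfl⟩
    constructor <;> field_simp <;> ring
  · rintro ⟨hu, hv⟩
    constructor <;> refine mul_right_cancel₀ (mul_ne_zero hc hc') ?_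
    · linear_combination c * hu + r * hv - f * mul_inv_cancel₀ hr
    · linear_combination c * hv + r⁻¹ * hu - g * mul_inv_cancel₀ hr

lemma IsLeadingBalance.indicial_x_self (h : IsLeadingBalance n x y) :
    indicial (Pi.single n 1) m x y x u v u n =
      m * u n + x n / y n * v n + x n * y n * (u (n + 1) - u (n - 1)) := by
  have hy := h.y_ne_zero
  rw [indicial_self, eq_one_div_of_mul_eq_one_right h.y_pole]
  field_simp
  ring

lemma IsLeadingBalance.indicial_y_self (h : IsLeadingBalance n x y) :
    indicial (Pi.single n 1) m x y y u v v n =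
      m * v n + (x n / y n)⁻¹ * u n + x n * y n * (v (n + 1) - v (n - 1)) := by
  have hx := h.x_ne_zero
  rw [indicial_self, eq_one_div_of_mul_eq_one_right h.x_pole]
  field_simp
  ring

variable [CharZero F]

lemma IsLeadingBalance.exists_indicial_eq_iff (h : IsLeadingBalance n x y) (hm : 2 ≤ m) {k : ℤ}
    (hk : k ≠ n) (f g : F) :
    ∃ p q : F, ∀ u v : ℤ → F,
      indicial (Pi.single n 1) m x y x u v u k = f ∧ indicial (Pi.single n 1) m x y y u v v k = g ↔
        u k = p ∧ v k = q := by
  have hm₀ : (m : F) ≠ 0 := Nat.cast_ne_zero.mpr (by omega)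
  have hm₁ : (m : F) - 1 ≠ 0 := sub_ne_zero.mpr (Nat.cast_ne_one.mpr (by omega))
  rcases two_le_abs_sub_or k n with hk' | rfl | rfl | rfl
  · refine ⟨f / m, g / m, fun u v => ?_⟩
    rw [indicial_of_two_le hk', indicial_of_two_le hk', eq_div_iff hm₀, eq_div_iff hm₀,
      mul_comm, mul_comm (v k)]
  · exact absurd rfl hk
  · simp only [h.indicial_add_one]
    obtain ⟨p, q, hpq⟩ := exists_neighbor_system_iff hm₀ hm₁ h.add_one_mul_add_mul f g
    exact ⟨p, q, fun u v => hpq _ _⟩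
  · have hsum : y (n - 1) * -x n + x (n - 1) * -y n = 1 := by
      linear_combination -h.sub_one_mul_add_mul
    obtain ⟨p, q, hpq⟩ := exists_neighbor_system_iff hm₀ hm₁ hsum f g
    simp only [mul_neg, sub_neg_eq_add] at hpq
    simp only [h.indicial_sub_one]
    exact ⟨p, q, fun u v => hpq _ _⟩

lemma IsLeadingBalance.exists_indicial_self_eq_iff (h : IsLeadingBalance n x y) (hm : 2 ≤ m)
    (f g : F) :
    ∃ p q : F → F → F, ∀ u v : ℤ → F,
      indicial (Pi.single n 1) m x y x u v u n = f ∧ indicial (Pi.single n 1) m x y y u v v n = g ↔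
        u n = p (u (n + 1) - u (n - 1)) (v (n + 1) - v (n - 1)) ∧
          v n = q (u (n + 1) - u (n - 1)) (v (n + 1) - v (n - 1)) := by
  have hm₁ : (m : F) - 1 ≠ 0 := sub_ne_zero.mpr (Nat.cast_ne_one.mpr (by omega))
  have hm₂ : (m : F) + 1 ≠ 0 := Nat.cast_add_one_ne_zero m
  choose p q hpq using fun δ ε => exists_pole_system_iff
    (div_ne_zero h.x_ne_zero h.y_ne_zero) hm₁ hm₂ (f - x n * y n * δ) (g - x n * y n * ε)
  simp only [eq_sub_iff_add_eq] at hpq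
  refine ⟨p, q, fun u v => ?_⟩
  rw [h.indicial_x_self, h.indicial_y_self, hpq]

theorem IsLeadingBalance.bijective_systemIndicial (h : IsLeadingBalance n x y) (hm : 2 ≤ m) :
    Function.Bijective (systemIndicial (Pi.single n 1) x y m) := by
  refine (Function.bijective_iff_existsUnique _).mpr fun f => ?_
  choose! p q hpq using fun k hk =>
    h.exists_indicial_eq_iff hm (k := k) hk (f (.inl k)) (f (.inr k))
  obtain ⟨P, Q, hPQ⟩ := h.exists_indicial_self_eq_iff hm (f (.inl n)) (f (.inr n))
  have eq_iff (u v : ℤ → F) : systemIndicial (Pi.single n 1) x y m (Sum.elim u v) = f ↔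
      u = Function.update p n (P (p (n + 1) - p (n - 1)) (q (n + 1) - q (n - 1))) ∧
        v = Function.update q n (Q (p (n + 1) - p (n - 1)) (q (n + 1) - q (n - 1))) := by
    simp only [funext_iff (g := f), Sum.forall, systemIndicial, Sum.elim_inl, Sum.elim_inr,
      Sum.elim_comp_inl, Sum.elim_comp_inr, ← forall_and]
    rw [← and_forall_ne n, hPQ, forall₂_congr fun k hk => hpq k hk u v,
      and_congr_left fun hoff => by
        rw [(hoff (n + 1) (by omega)).1, (hoff (n + 1) (by omega)).2, (hoff (n - 1) (by omega)).1,
          (hoff (n - 1) (by omega)).2]]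
    simp only [Function.eq_update_iff, imp_and, forall_and]
    tauto
  refine ⟨Sum.elim _ _, (eq_iff _ _).mpr ⟨rfl, rfl⟩, fun c hc => ?_⟩
  rw [← Sum.elim_comp_inl_inr c] at hc ⊢
  rw [((eq_iff _ _).mp hc).1, ((eq_iff _ _).mp hc).2]

end Bijectivity

section FirstOrder

variable {R : Type*} [CommRing R] {n : ℤ}

/-- The terms of order `t` contributed to the equations at the site `k` by the leading
coefficients alone; at the pole and at its two neighbors there are none. -/
def source (n : ℤ) (x y z : ℤ → R) (k : ℤ) : R :=
  if 2 ≤ |k - n| then (1 - x k * y k) * (z (k + 1) - z (k - 1)) else 0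

lemma source_of_two_le {x y z : ℤ → R} {k : ℤ} (hk : 2 ≤ |k - n|) :
    source n x y z k = (1 - x k * y k) * (z (k + 1) - z (k - 1)) := if_pos hk

lemma source_self {x y z : ℤ → R} : source n x y z n = 0 := by simp [source]

lemma source_add_one {x y z : ℤ → R} : source n x y z (n + 1) = 0 := by simp [source]

lemma source_sub_one {x y z : ℤ → R} : source n x y z (n - 1) = 0 := by simp [source]

lemma IsLeadingBalance.X_sq_dvd_residual_C_add {x y z : ℤ → R} (h : IsLeadingBalance n x y)
    (hz : x n * y n * (z (n + 1) - z (n - 1)) = z n) (k : ℤ) :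
    X ^ 2 ∣ residual (Pi.single n 1) (fun j => C (x j)) (fun j => C (y j)) (fun j => C (z j)) k
      + X * C (source n x y z k) := by
  rcases two_le_abs_sub_or k n with hk | rfl | rfl | rfl
  · have : residual (Pi.single n 1) (fun j => C (x j)) (fun j => C (y j)) (fun j => C (z j)) k
        + X * C (source n x y z k) = 0 := by
      simp only [residual, scaledDiff_single_of_two_le _ _ hk, source_of_two_le hk,
        Pi.single_eq_of_ne (ne_of_two_le_abs_sub hk).1, derivative_C, map_mul, map_sub, map_one]
      ring
    exact this ▸ dvd_zero _
  · refine ⟨-C (z (k + 1) - z (k - 1)), ?_⟩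
    have hC : C (x k) * C (y k) * (C (z (k + 1)) - C (z (k - 1))) = C (z k) := by
      simp only [← map_mul, ← map_sub, hz]
    simp only [residual, scaledDiff_single_self, source_self, Pi.single_eq_same, derivative_C,
      map_zero, map_sub]
    push_cast
    linear_combination hC
  · simp [residual, scaledDiff_single_add_one, source_add_one, ← map_mul, h.succ]
  · simp [residual, scaledDiff_single_sub_one, source_sub_one, ← map_mul, h.pred]

lemma IsLeadingBalance.X_sq_dvd_residual_iff {x₀ y₀ z₀ : ℤ → R} (h : IsLeadingBalance n x₀ y₀)
    (hz₀ : x₀ n * y₀ n * (z₀ (n + 1) - z₀ (n - 1)) = z₀ n) {x y z : ℤ → R⟦X⟧}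
    (hx : ∀ k, constantCoeff (x k) = x₀ k) (hy : ∀ k, constantCoeff (y k) = y₀ k)
    (hz : ∀ k, constantCoeff (z k) = z₀ k) (k : ℤ) :
    X ^ 2 ∣ residual (Pi.single n 1) x y z k ↔
      indicial (Pi.single n 1) 1 x₀ y₀ z₀ (fun k => coeff 1 (x k)) (fun k => coeff 1 (y k))
        (fun k => coeff 1 (z k)) k = source n x₀ y₀ z₀ k := by
  have split {f : ℤ → R⟦X⟧} {f₀ : ℤ → R} (hf : ∀ k, constantCoeff (f k) = f₀ k) :
      (fun k => C (f₀ k)) + (X : R⟦X⟧) ^ 1 • (fun k => .mk fun i => coeff (i + 1) (f k)) = f := by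
    funext k
    rw [Pi.add_apply, Pi.smul_apply, pow_one, smul_eq_mul, ← hf, add_comm,
      ← eq_X_mul_shift_add_const]
  have perturb := X_pow_succ_dvd_residual_sub (Pi.single n 1) one_ne_zero
    (fun k => C (x₀ k)) (fun k => C (y₀ k)) (fun k => C (z₀ k))
    (fun k => .mk fun i => coeff (i + 1) (x k)) (fun k => .mk fun i => coeff (i + 1) (y k))
    (fun k => .mk fun i => coeff (i + 1) (z k)) k
  simp only [split hx, split hy, split hz, constantCoeff_C, constantCoeff_mk, zero_add] at perturb
  have remainder := dvd_add perturb (h.X_sq_dvd_residual_C_add hz₀ k)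
  rw [← sub_eq_zero (b := source n x₀ y₀ z₀ k), ← constantCoeff_C (R := R) (_ - _),
    ← X_pow_succ_dvd_X_pow_mul_iff (m := 1)]
  refine dvd_iff_dvd_of_dvd_sub ?_
  convert remainder using 1
  rw [map_sub]
  ring

end FirstOrder

section Resonance

variable {F : Type*} [Field F] {n : ℤ} {x y u v : ℤ → F} (s : ℤ → F)

/-- The coefficients following the leading ones in the expansions of the functions `x k`. They are
the free parameters `x k * s k` at the pole and at its two neighbors. -/
def nextX (n : ℤ) (x y s : ℤ → F) (k : ℤ) : F :=
  if 2 ≤ |k - n| then (1 - x k * y k) * (x (k + 1) - x (k - 1)) else x k * s k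

/-- The coefficients following the leading ones in the expansions of the functions `y k`, as
determined by the leading coefficients and by the free parameters `s` of `nextX`. -/
def nextY (n : ℤ) (x y s : ℤ → F) (k : ℤ) : F :=
  if 2 ≤ |k - n| then (1 - x k * y k) * (y (k + 1) - y (k - 1))
  else if k = n then
    -(y n * s n) - y n ^ 2 * (x (n + 1) * s (n + 1) - x (n - 1) * s (n - 1))
  else y n / x n * (x k * s k)

lemma nextX_of_two_le {k : ℤ} (hk : 2 ≤ |k - n|) :
    nextX n x y s k = (1 - x k * y k) * (x (k + 1) - x (k - 1)) := if_pos hk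

lemma nextX_of_abs_le {k : ℤ} (hk : |k - n| ≤ 1) : nextX n x y s k = x k * s k :=
  if_neg (by omega)

lemma nextY_of_two_le {k : ℤ} (hk : 2 ≤ |k - n|) :
    nextY n x y s k = (1 - x k * y k) * (y (k + 1) - y (k - 1)) := if_pos hk

lemma nextY_self : nextY n x y s n =
    -(y n * s n) - y n ^ 2 * (x (n + 1) * s (n + 1) - x (n - 1) * s (n - 1)) := by
  simp [nextY]

lemma nextY_add_one : nextY n x y s (n + 1) = y n / x n * (x (n + 1) * s (n + 1)) := by
  simp [nextY]

lemma nextY_sub_one : nextY n x y s (n - 1) = y n / x n * (x (n - 1) * s (n - 1)) := by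
  simp [nextY]

lemma neighbor_resonance_iff {R : Type*} [CommRing R] {p q X Y u v : R} (h : q * X + p * Y = 1) :
    u - (p * v + u * q) * X = 0 ∧ v - (p * v + u * q) * Y = 0 ↔ X * v = Y * u := by
  refine ⟨fun ⟨hu, hv⟩ => ?_, fun huv => ⟨?_, ?_⟩⟩
  · linear_combination X * hv - Y * hu
  · linear_combination -p * huv - u * h
  · linear_combination q * huv - v * h

namespace IsLeadingBalance

lemma first_order_add_one_iff (h : IsLeadingBalance n x y) :
    indicial (Pi.single n 1) 1 x y x u v u (n + 1) = source n x y x (n + 1) ∧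
      indicial (Pi.single n 1) 1 x y y u v v (n + 1) = source n x y y (n + 1) ↔
    v (n + 1) = y n / x n * u (n + 1) := by
  rw [h.indicial_add_one, h.indicial_add_one, source_add_one, source_add_one, Nat.cast_one, one_mul,
    one_mul, neighbor_resonance_iff h.add_one_mul_add_mul, div_mul_eq_mul_div,
    eq_div_iff h.x_ne_zero, mul_comm]

lemma first_order_sub_one_iff (h : IsLeadingBalance n x y) :
    indicial (Pi.single n 1) 1 x y x u v u (n - 1) = source n x y x (n - 1) ∧
      indicial (Pi.single n 1) 1 x y y u v v (n - 1) = source n x y y (n - 1) ↔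
    v (n - 1) = y n / x n * u (n - 1) := by
  have hsum : y (n - 1) * -x n + x (n - 1) * -y n = 1 := by
    linear_combination -h.sub_one_mul_add_mul
  have := neighbor_resonance_iff (u := u (n - 1)) (v := v (n - 1)) hsum
  simp only [mul_neg, sub_neg_eq_add, neg_mul, neg_inj] at this
  rw [h.indicial_sub_one, h.indicial_sub_one, source_sub_one, source_sub_one, Nat.cast_one, one_mul,
    one_mul, this, div_mul_eq_mul_div, eq_div_iff h.x_ne_zero, mul_comm]

lemma first_order_self_iff (h : IsLeadingBalance n x y)
    (hadd : v (n + 1) = y n / x n * u (n + 1)) (hsub : v (n - 1) = y n / x n * u (n - 1)) :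
    indicial (Pi.single n 1) 1 x y x u v u n = source n x y x n ∧
      indicial (Pi.single n 1) 1 x y y u v v n = source n x y y n ↔
    v n = -(y n / x n * u n) - y n ^ 2 * (u (n + 1) - u (n - 1)) := by
  have hx := h.x_ne_zero
  have hy := h.y_ne_zero
  rw [h.indicial_x_self, h.indicial_y_self, source_self, source_self, hadd, hsub, Nat.cast_one]
  constructor
  · rintro ⟨hu, -⟩
    field_simp at hu ⊢
    linear_combination hu
  · intro hv
    rw [hv]
    constructor <;> field_simp <;> ring

lemma first_order_iff_of_eq_mul (h : IsLeadingBalance n x y)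
    (hu : ∀ k, |k - n| ≤ 1 → u k = x k * s k) :
    (∀ k, indicial (Pi.single n 1) 1 x y x u v u k = source n x y x k ∧
        indicial (Pi.single n 1) 1 x y y u v v k = source n x y y k) ↔
      ∀ k, u k = nextX n x y s k ∧ v k = nextY n x y s k := by
  have u_eq {k : ℤ} (hk : |k - n| ≤ 1) : u k = nextX n x y s k := by
    rw [hu k hk, nextX_of_abs_le s hk]
  have hself : u n = x n * s n := hu n (by simp)
  have hadd : u (n + 1) = x (n + 1) * s (n + 1) := hu (n + 1) (by simp)
  have hsub : u (n - 1) = x (n - 1) * s (n - 1) := hu (n - 1) (by simp)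
  refine (forall_site_iff (n := n)).trans (.trans ?_ (forall_site_iff (n := n)).symm)
  refine and_congr (forall₂_congr fun k hk => ?_) ?_
  · rw [indicial_of_two_le hk, indicial_of_two_le hk, source_of_two_le hk, source_of_two_le hk,
      nextX_of_two_le s hk, nextY_of_two_le s hk, Nat.cast_one, one_mul, one_mul]
  · rw [h.first_order_add_one_iff, h.first_order_sub_one_iff,
      and_congr_left fun hv => h.first_order_self_iff hv.1 hv.2, and_iff_right (u_eq (by simp)),
      and_iff_right (u_eq (by simp)), and_iff_right (u_eq (by simp)), nextY_self, nextY_add_one,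
      nextY_sub_one, hself, hadd, hsub, ← mul_assoc, div_mul_cancel₀ _ h.x_ne_zero]

lemma first_order_iff (h : IsLeadingBalance n x y) :
    ((∀ k, indicial (Pi.single n 1) 1 x y x u v u k = source n x y x k ∧
        indicial (Pi.single n 1) 1 x y y u v v k = source n x y y k) ∧
      ∀ k, |k - n| ≤ 1 → u k = x k * s k) ↔
      ∀ k, u k = nextX n x y s k ∧ v k = nextY n x y s k := by
  rw [and_congr_left (h.first_order_iff_of_eq_mul s)]
  exact and_iff_left_of_imp fun huv k hk => (huv k).1.trans (nextX_of_abs_le s hk)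

end IsLeadingBalance

end Resonance

section PoleSolution

variable {F : Type*} [Field F] {n : ℤ} {x₀ y₀ s : ℤ → F}

lemma X_sq_dvd_sub_iff {R : Type*} [CommRing R] {f : R⟦X⟧} {a b : R} :
    X ^ 2 ∣ f - (C a + C b * X) ↔ constantCoeff f = a ∧ coeff 1 f = b := by
  simp [X_pow_dvd_iff, sub_eq_zero, coeff_C, Nat.le_one_iff_eq_zero_or_eq_one]

/-- The expansions of the functions `x k` (`Sum.inl k`) and `y k` (`Sum.inr k`), multiplied by `t`
for `k = n`, up to `O(t²)`. -/
def jet (n : ℤ) (x₀ y₀ s : ℤ → F) : ℤ ⊕ ℤ → F⟦X⟧ :=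
  Sum.elim (fun k => C (x₀ k) + C (nextX n x₀ y₀ s k) * X)
    fun k => C (y₀ k) + C (nextY n x₀ y₀ s k) * X

lemma X_sq_dvd_sub_jet_iff {x y : ℤ → F⟦X⟧} :
    (∀ i, X ^ 2 ∣ Sum.elim x y i - jet n x₀ y₀ s i) ↔
      ((∀ k, constantCoeff (x k) = x₀ k) ∧ ∀ k, constantCoeff (y k) = y₀ k) ∧
        ∀ k, coeff 1 (x k) = nextX n x₀ y₀ s k ∧ coeff 1 (y k) = nextY n x₀ y₀ s k := by
  simp only [jet, Sum.forall, Sum.elim_inl, Sum.elim_inr, X_sq_dvd_sub_iff, forall_and]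
  tauto

lemma IsLeadingBalance.X_sq_dvd_sub_jet_iff_residual (h : IsLeadingBalance n x₀ y₀)
    {x y : ℤ → F⟦X⟧} :
    (∀ i, X ^ 2 ∣ Sum.elim x y i - jet n x₀ y₀ s i) ↔
      ((∀ k, constantCoeff (x k) = x₀ k) ∧ ∀ k, constantCoeff (y k) = y₀ k) ∧
        (∀ i, X ^ 2 ∣ systemResidual (Pi.single n 1) (Sum.elim x y) i) ∧
          ∀ k, |k - n| ≤ 1 → coeff 1 (x k) = x₀ k * s k := by
  rw [X_sq_dvd_sub_jet_iff]
  refine and_congr_right fun ⟨hx, hy⟩ => ?_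
  rw [← h.first_order_iff s]
  simp only [systemResidual, Sum.forall, Sum.elim_inl, Sum.elim_inr, Sum.elim_comp_inl,
    Sum.elim_comp_inr, h.X_sq_dvd_residual_iff h.x_eq hx hy hx,
    h.X_sq_dvd_residual_iff h.y_eq hx hy hy, forall_and]

lemma IsLeadingBalance.existsUnique_systemResidual_eq_zero [CharZero F]
    (h : IsLeadingBalance n x₀ y₀) (s : ℤ → F) :
    ∃! z : ℤ ⊕ ℤ → F⟦X⟧, (∀ i, X ^ 2 ∣ z i - jet n x₀ y₀ s i) ∧
      ∀ i, systemResidual (Pi.single n 1) z i = 0 := by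
  have jet_residual : ∀ i, X ^ 2 ∣ systemResidual (Pi.single n 1) (jet n x₀ y₀ s) i :=
    (h.X_sq_dvd_sub_jet_iff_residual.mp fun i =>
      (sub_self (jet n x₀ y₀ s i)).symm ▸ dvd_zero _).2.1
  refine (hasIndicialMaps_systemResidual (Pi.single n 1) two_ne_zero _).existsUnique_eq_zero
    (fun m hm => ?_) jet_residual
  simpa [jet] using h.bijective_systemIndicial hm

/-- The formal Laurent solutions whose only poles are simple poles of `x n` and `y n`, with
prescribed leading coefficients `x₀`, `y₀` and with the next coefficients of `x n` and `x (n ± 1)`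
prescribed, relative to the leading ones, by `s`. -/
structure IsPoleSolution (n : ℤ) (x₀ y₀ s : ℤ → F) (x y : ℤ → LaurentSeries F) : Prop where
  isSolT : IsSolT x y
  bigO_x : ∀ k, BigO (x k) (-(Pi.single n 1 : ℤ → ℕ) k)
  bigO_y : ∀ k, BigO (y k) (-(Pi.single n 1 : ℤ → ℕ) k)
  leading_x : ∀ k, (x k).coeff (0 - (Pi.single n 1 : ℤ → ℕ) k) = x₀ k
  leading_y : ∀ k, (y k).coeff (0 - (Pi.single n 1 : ℤ → ℕ) k) = y₀ k
  next_x : ∀ k, |k - n| ≤ 1 → (x k).coeff (1 - (Pi.single n 1 : ℤ → ℕ) k) = x₀ k * s k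

lemma coeff_withPoles (e : ℤ → ℕ) (x : ℤ → F⟦X⟧) (j : ℕ) (k : ℤ) :
    (withPoles e x k).coeff (j - e k) = coeff j (x k) := by
  rw [withPoles, coeff_div_X_pow, sub_add_cancel, LaurentSeries.coeff_coe_powerSeries]

lemma single_add_single_add_one_le (n k : ℤ) :
    (Pi.single n 1 : ℤ → ℕ) k + (Pi.single n 1 : ℤ → ℕ) (k + 1) ≤ 1 := by
  simp only [Pi.single_apply]
  grind

lemma IsLeadingBalance.isPoleSolution_withPoles_iff (h : IsLeadingBalance n x₀ y₀)
    {x y : ℤ → F⟦X⟧} :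
    IsPoleSolution n x₀ y₀ s (withPoles (Pi.single n 1) x) (withPoles (Pi.single n 1) y) ↔
      (∀ i, X ^ 2 ∣ Sum.elim x y i - jet n x₀ y₀ s i) ∧
        ∀ i, systemResidual (Pi.single n 1) (Sum.elim x y) i = 0 := by
  have coeff_zero (z : ℤ → F⟦X⟧) (k : ℤ) := coeff_withPoles (Pi.single n 1) z 0 k
  have coeff_one (z : ℤ → F⟦X⟧) (k : ℤ) := coeff_withPoles (Pi.single n 1) z 1 k
  simp only [Nat.cast_zero, Nat.cast_one, coeff_zero_eq_constantCoeff_apply] at coeff_zero coeff_one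
  rw [← isSolT_withPoles_iff (single_add_single_add_one_le n), h.X_sq_dvd_sub_jet_iff_residual]
  constructor
  · rintro ⟨hsol, -, -, hx, hy, hs⟩
    simp only [coeff_zero, coeff_one] at hx hy hs
    have hres := (isSolT_withPoles_iff (single_add_single_add_one_le n)).mp hsol
    exact ⟨⟨⟨hx, hy⟩, fun i => (hres i).symm ▸ dvd_zero _, hs⟩, hsol⟩
  · rintro ⟨⟨⟨hx, hy⟩, -, hs⟩, hsol⟩
    refine ⟨hsol, forall_bigO_iff.mpr ⟨x, rfl⟩, forall_bigO_iff.mpr ⟨y, rfl⟩, ?_, ?_, ?_⟩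
    · simpa only [coeff_zero] using hx
    · simpa only [coeff_zero] using hy
    · simpa only [coeff_one] using hs

theorem IsLeadingBalance.exists_isPoleSolution [CharZero F] (h : IsLeadingBalance n x₀ y₀)
    (s : ℤ → F) :
    ∃ x y : ℤ → LaurentSeries F, IsPoleSolution n x₀ y₀ s x y ∧
      (∀ k, (x k).coeff (1 - (Pi.single n 1 : ℤ → ℕ) k) = nextX n x₀ y₀ s k ∧
        (y k).coeff (1 - (Pi.single n 1 : ℤ → ℕ) k) = nextY n x₀ y₀ s k) ∧
      ∀ x' y', IsPoleSolution n x₀ y₀ s x' y' → x' = x ∧ y' = y := by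
  obtain ⟨z, ⟨hjet, hres⟩, hunique⟩ := h.existsUnique_systemResidual_eq_zero s
  obtain ⟨x, y, rfl⟩ : ∃ x y, z = Sum.elim x y := ⟨_, _, (Sum.elim_comp_inl_inr z).symm⟩
  refine ⟨withPoles (Pi.single n 1) x, withPoles (Pi.single n 1) y,
    h.isPoleSolution_withPoles_iff.mpr ⟨hjet, hres⟩, fun k => ?_, fun x' y' h' => ?_⟩
  · have coeff_one (z : ℤ → F⟦X⟧) := coeff_withPoles (Pi.single n 1) z 1 k
    rw [Nat.cast_one] at coeff_one
    rw [coeff_one, coeff_one]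
    exact (X_sq_dvd_sub_jet_iff.mp hjet).2 k
  · obtain ⟨p, rfl⟩ := forall_bigO_iff.mp h'.bigO_x
    obtain ⟨q, rfl⟩ := forall_bigO_iff.mp h'.bigO_y
    have heq := hunique (Sum.elim p q) (h.isPoleSolution_withPoles_iff.mp h')
    obtain ⟨rfl, rfl⟩ := Sum.elim_eq_iff.mp heq
    exact ⟨rfl, rfl⟩

end PoleSolution

section Data

variable {F : Type*} [Field F] {n : ℤ} {a b : ℤ → F} {aa ap am : F} {x y : ℤ → LaurentSeries F}

lemma forall_abs_sub_le_one_iff {P : ℤ → Prop} :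
    (∀ k, |k - n| ≤ 1 → P k) ↔ P (n + 1) ∧ P (n - 1) ∧ P n := by
  refine ⟨fun h => ⟨h _ (by simp), h _ (by simp), h _ (by simp)⟩, fun ⟨succ, pred, self⟩ k hk => ?_⟩
  rcases two_le_abs_sub_or k n with hk' | rfl | rfl | rfl
  exacts [absurd hk (by omega), self, succ, pred]

lemma forall_bigO_neg_single_iff {z : ℤ → LaurentSeries F} :
    (∀ k, BigO (z k) (-(Pi.single n 1 : ℤ → ℕ) k)) ↔
      BigO (z n) (-1) ∧ ∀ k, k ≠ n → BigO (z k) 0 := by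
  rw [← and_forall_ne n]
  exact and_congr (by simp) (forall₂_congr fun k hk => by simp [hk])

lemma forall_coeff_zero_sub_single_iff {z : ℤ → LaurentSeries F} {z₀ : ℤ → F} :
    (∀ k, (z k).coeff (0 - (Pi.single n 1 : ℤ → ℕ) k) = z₀ k) ↔
      (∀ k, 2 ≤ |k - n| → (z k).coeff 0 = z₀ k) ∧ (z n).coeff (-1) = z₀ n ∧
        (z (n + 1)).coeff 0 = z₀ (n + 1) ∧ (z (n - 1)).coeff 0 = z₀ (n - 1) := by
  rw [forall_site_iff (n := n)]
  refine and_congr (forall₂_congr fun k hk => ?_) (by simp)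
  rw [Pi.single_eq_of_ne (ne_of_two_le_abs_sub hk).1, Nat.cast_zero, sub_zero]

lemma forall_coeff_one_sub_single_iff {z : ℤ → LaurentSeries F} {z₁ : ℤ → F} :
    (∀ k, |k - n| ≤ 1 → (z k).coeff (1 - (Pi.single n 1 : ℤ → ℕ) k) = z₁ k) ↔
      (z (n + 1)).coeff 1 = z₁ (n + 1) ∧ (z (n - 1)).coeff 1 = z₁ (n - 1) ∧
        (z n).coeff 0 = z₁ n := by
  rw [forall_abs_sub_le_one_iff]
  simp

lemma isPoleSolution_iff {x₀ y₀ s : ℤ → F} :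
    IsPoleSolution n x₀ y₀ s x y ↔
      IsSolT x y ∧
        (∀ k, k ≠ n → BigO (x k) 0 ∧ BigO (y k) 0) ∧
        BigO (x n) (-1) ∧ BigO (y n) (-1) ∧
        (∀ k, 2 ≤ |k - n| → (x k).coeff 0 = x₀ k ∧ (y k).coeff 0 = y₀ k) ∧
        (x (n + 1)).coeff 0 = x₀ (n + 1) ∧ (x (n - 1)).coeff 0 = x₀ (n - 1) ∧
        (y (n + 1)).coeff 0 = y₀ (n + 1) ∧ (y (n - 1)).coeff 0 = y₀ (n - 1) ∧
        (x (n + 1)).coeff 1 = x₀ (n + 1) * s (n + 1) ∧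
        (x (n - 1)).coeff 1 = x₀ (n - 1) * s (n - 1) ∧
        (x n).coeff (-1) = x₀ n ∧ (y n).coeff (-1) = y₀ n ∧
        (x n).coeff 0 = x₀ n * s n := by
  constructor
  · rintro ⟨hsol, hx, hy, hx₀, hy₀, hs⟩
    rw [forall_bigO_neg_single_iff] at hx hy
    rw [forall_coeff_zero_sub_single_iff] at hx₀ hy₀
    rw [forall_coeff_one_sub_single_iff] at hs
    exact ⟨hsol, fun k hk => ⟨hx.2 k hk, hy.2 k hk⟩, hx.1, hy.1,
      fun k hk => ⟨hx₀.1 k hk, hy₀.1 k hk⟩, hx₀.2.2.1, hx₀.2.2.2, hy₀.2.2.1, hy₀.2.2.2,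
      hs.1, hs.2.1, hx₀.2.1, hy₀.2.1, hs.2.2⟩
  · rintro ⟨hsol, hO, hOx, hOy, hfar, hx_succ, hx_pred, hy_succ, hy_pred, hs_succ, hs_pred,
      hx_self, hy_self, hs_self⟩
    exact ⟨hsol, forall_bigO_neg_single_iff.mpr ⟨hOx, fun k hk => (hO k hk).1⟩,
      forall_bigO_neg_single_iff.mpr ⟨hOy, fun k hk => (hO k hk).2⟩,
      forall_coeff_zero_sub_single_iff.mpr ⟨fun k hk => (hfar k hk).1, hx_self, hx_succ, hx_pred⟩,
      forall_coeff_zero_sub_single_iff.mpr ⟨fun k hk => (hfar k hk).2, hy_self, hy_succ, hy_pred⟩,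
      forall_coeff_one_sub_single_iff.mpr ⟨hs_succ, hs_pred, hs_self⟩⟩

/-- The leading coefficients of the functions `x k` for the parameters `a`. -/
def leadingX (n : ℤ) (a : ℤ → F) : ℤ → F :=
  Function.update a n (a (n - 1) * a (n + 1) / (a (n - 1) - a (n + 1)))

/-- The leading coefficients of the functions `y k` for the parameters `a` and `b`. -/
def leadingY (n : ℤ) (a b : ℤ → F) : ℤ → F :=
  Function.update b n (-1 / (a (n - 1) - a (n + 1)))

/-- The free parameters `aa`, `ap` and `am` (the paper's `a`, `a₊` and `a₋`) of the coefficients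
following the leading ones, placed at the sites `n`, `n + 1` and `n - 1`. -/
def nextParam {α : Type*} (n : ℤ) (aa ap am : α) (k : ℤ) : α :=
  if k = n then aa else if n < k then ap else am

lemma leadingX_self : leadingX n a n = a (n - 1) * a (n + 1) / (a (n - 1) - a (n + 1)) := by
  simp [leadingX]

lemma leadingX_of_ne {k : ℤ} (hk : k ≠ n) : leadingX n a k = a k := by simp [leadingX, hk]

lemma leadingY_self : leadingY n a b n = -1 / (a (n - 1) - a (n + 1)) := by simp [leadingY]

lemma leadingY_of_ne {k : ℤ} (hk : k ≠ n) : leadingY n a b k = b k := by simp [leadingY, hk]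

lemma nextParam_self {α : Type*} {aa ap am : α} : nextParam n aa ap am n = aa := by simp [nextParam]

lemma nextParam_add_one {α : Type*} {aa ap am : α} : nextParam n aa ap am (n + 1) = ap := by
  simp [nextParam]

lemma nextParam_sub_one {α : Type*} {aa ap am : α} : nextParam n aa ap am (n - 1) = am := by
  simp [nextParam]

lemma leadingX_add_one : leadingX n a (n + 1) = a (n + 1) := leadingX_of_ne (by omega)

lemma leadingX_sub_one : leadingX n a (n - 1) = a (n - 1) := leadingX_of_ne (by omega)

lemma leadingY_add_one (hb1 : b (n + 1) = (a (n + 1))⁻¹) :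
    leadingY n a b (n + 1) = (a (n + 1))⁻¹ := (leadingY_of_ne (by omega)).trans hb1

lemma leadingY_sub_one (hb2 : b (n - 1) = (a (n - 1))⁻¹) :
    leadingY n a b (n - 1) = (a (n - 1))⁻¹ := (leadingY_of_ne (by omega)).trans hb2

lemma ne_zero_of_mul_mul_sub_ne_zero {p q : F} (h : p * q * (p - q) ≠ 0) :
    p ≠ 0 ∧ q ≠ 0 ∧ q - p ≠ 0 := by
  rw [mul_ne_zero_iff, mul_ne_zero_iff] at h
  exact ⟨h.1.1, h.1.2, sub_ne_zero.mpr (sub_ne_zero.mp h.2).symm⟩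

lemma isLeadingBalance_leading (hb1 : b (n + 1) = (a (n + 1))⁻¹)
    (hb2 : b (n - 1) = (a (n - 1))⁻¹)
    (hreg : a (n + 1) * a (n - 1) * (a (n + 1) - a (n - 1)) ≠ 0) :
    IsLeadingBalance n (leadingX n a) (leadingY n a b) := by
  obtain ⟨hsucc, hpred, hsub⟩ := ne_zero_of_mul_mul_sub_ne_zero hreg
  constructor <;> simp only [leadingX_self, leadingX_add_one, leadingX_sub_one, leadingY_self,
    leadingY_add_one hb1, leadingY_sub_one hb2] <;> field_simp
  ring

lemma isPoleSolution_leading_iff (hb1 : b (n + 1) = (a (n + 1))⁻¹)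
    (hb2 : b (n - 1) = (a (n - 1))⁻¹) :
    IsPoleSolution n (leadingX n a) (leadingY n a b) (nextParam n aa ap am) x y ↔
      IsSolT x y ∧
        (∀ k, k ≠ n → BigO (x k) 0 ∧ BigO (y k) 0) ∧
        BigO (x n) (-1) ∧ BigO (y n) (-1) ∧
        (∀ k, 2 ≤ |k - n| → (x k).coeff 0 = a k ∧ (y k).coeff 0 = b k) ∧
        (x (n + 1)).coeff 0 = a (n + 1) ∧ (x (n - 1)).coeff 0 = a (n - 1) ∧
        (y (n + 1)).coeff 0 = (a (n + 1))⁻¹ ∧ (y (n - 1)).coeff 0 = (a (n - 1))⁻¹ ∧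
        (x (n + 1)).coeff 1 = a (n + 1) * ap ∧ (x (n - 1)).coeff 1 = a (n - 1) * am ∧
        (x n).coeff (-1) = a (n - 1) * a (n + 1) / (a (n - 1) - a (n + 1)) ∧
        (y n).coeff (-1) = -1 / (a (n - 1) - a (n + 1)) ∧
        (x n).coeff 0 = a (n - 1) * a (n + 1) * aa / (a (n - 1) - a (n + 1)) := by
  have far : (∀ k, 2 ≤ |k - n| → (x k).coeff 0 = leadingX n a k ∧
      (y k).coeff 0 = leadingY n a b k) ↔
        ∀ k, 2 ≤ |k - n| → (x k).coeff 0 = a k ∧ (y k).coeff 0 = b k :=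
    forall₂_congr fun k hk => by
      rw [leadingX_of_ne (ne_of_two_le_abs_sub hk).1, leadingY_of_ne (ne_of_two_le_abs_sub hk).1]
  rw [isPoleSolution_iff, far]
  simp only [leadingX_add_one, leadingX_sub_one, leadingX_self, leadingY_add_one hb1,
    leadingY_sub_one hb2, leadingY_self, nextParam_add_one, nextParam_sub_one, nextParam_self,
    div_mul_eq_mul_div]

lemma nextX_leading_of_two_le {s : ℤ → F} {k : ℤ} (hk : 2 ≤ |k - n|) :
    nextX n (leadingX n a) (leadingY n a b) s k = (1 - a k * b k) * (a (k + 1) - a (k - 1)) := by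
  obtain ⟨hself, hsucc, hpred⟩ := ne_of_two_le_abs_sub hk
  rw [nextX_of_two_le s hk, leadingX_of_ne hself, leadingX_of_ne hsucc, leadingX_of_ne hpred,
    leadingY_of_ne hself]

lemma nextY_leading_of_two_le {s : ℤ → F} {k : ℤ} (hk : 2 ≤ |k - n|) :
    nextY n (leadingX n a) (leadingY n a b) s k = (1 - a k * b k) * (b (k + 1) - b (k - 1)) := by
  obtain ⟨hself, hsucc, hpred⟩ := ne_of_two_le_abs_sub hk
  rw [nextY_of_two_le s hk, leadingX_of_ne hself, leadingY_of_ne hself, leadingY_of_ne hsucc,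
    leadingY_of_ne hpred]

lemma nextY_leading_add_one
    (hreg : a (n + 1) * a (n - 1) * (a (n + 1) - a (n - 1)) ≠ 0) :
    nextY n (leadingX n a) (leadingY n a b) (nextParam n aa ap am) (n + 1) = -(ap / a (n - 1)) := by
  obtain ⟨hsucc, hpred, hsub⟩ := ne_zero_of_mul_mul_sub_ne_zero hreg
  rw [nextY_add_one, leadingX_self, leadingY_self, leadingX_add_one, nextParam_add_one]
  field_simp

lemma nextY_leading_sub_one
    (hreg : a (n + 1) * a (n - 1) * (a (n + 1) - a (n - 1)) ≠ 0) :
    nextY n (leadingX n a) (leadingY n a b) (nextParam n aa ap am) (n - 1) = -(am / a (n + 1)) := by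
  obtain ⟨hsucc, hpred, hsub⟩ := ne_zero_of_mul_mul_sub_ne_zero hreg
  rw [nextY_sub_one, leadingX_self, leadingY_self, leadingX_sub_one, nextParam_sub_one]
  field_simp

lemma nextY_leading_self
    (hreg : a (n + 1) * a (n - 1) * (a (n + 1) - a (n - 1)) ≠ 0) :
    nextY n (leadingX n a) (leadingY n a b) (nextParam n aa ap am) n =
      (aa + (a (n + 1) * ap - a (n - 1) * am) / (a (n + 1) - a (n - 1))) /
        (a (n - 1) - a (n + 1)) := by
  obtain ⟨-, -, hsub⟩ := ne_zero_of_mul_mul_sub_ne_zero hreg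
  have hneg : a (n + 1) - a (n - 1) = -(a (n - 1) - a (n + 1)) := (neg_sub _ _).symm
  rw [nextY_self, leadingY_self, leadingX_add_one, leadingX_sub_one, nextParam_self,
    nextParam_add_one, nextParam_sub_one, hneg]
  field_simp
  ring

end Data

end SingConf

/-- For any `n ∈ ℤ`, any field `F` of characteristic `0`, and any choice of
`a, a₊, a₋, a_{n+1}, a_{n-1}, a_k, b_k ∈ F` (`|k - n| ≥ 2`; encoded as functions
`a b : ℤ → F` with `b_{n±1} = 1/a_{n±1}`, the values at `n` never being used) with
`a_{n+1} a_{n-1} (a_{n+1} - a_{n-1}) ≠ 0`, the first Toeplitz vector field admits a formal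
Laurent solution `(x(t), y(t))` in which only `x_n(t)` and `y_n(t)` have a (simple) pole,
with the stated expansions; all higher coefficients are uniquely determined by these data. -/
theorem statement3 (F : Type*) [Field F] [CharZero F] (n : ℤ)
    (aa ap am : F) (a b : ℤ → F)
    (hb1 : b (n + 1) = (a (n + 1))⁻¹) (hb2 : b (n - 1) = (a (n - 1))⁻¹)
    (hreg : a (n + 1) * a (n - 1) * (a (n + 1) - a (n - 1)) ≠ 0) :
    ∃ x y : ℤ → LaurentSeries F,
      -- the data characterizing the solution:
      (IsSolT x y ∧
        (∀ k, k ≠ n → BigO (x k) 0 ∧ BigO (y k) 0) ∧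
        BigO (x n) (-1) ∧ BigO (y n) (-1) ∧
        (∀ k, 2 ≤ |k - n| → (x k).coeff 0 = a k ∧ (y k).coeff 0 = b k) ∧
        (x (n + 1)).coeff 0 = a (n + 1) ∧ (x (n - 1)).coeff 0 = a (n - 1) ∧
        (y (n + 1)).coeff 0 = (a (n + 1))⁻¹ ∧ (y (n - 1)).coeff 0 = (a (n - 1))⁻¹ ∧
        (x (n + 1)).coeff 1 = a (n + 1) * ap ∧ (x (n - 1)).coeff 1 = a (n - 1) * am ∧
        (x n).coeff (-1) = a (n - 1) * a (n + 1) / (a (n - 1) - a (n + 1)) ∧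
        (y n).coeff (-1) = -1 / (a (n - 1) - a (n + 1)) ∧
        (x n).coeff 0 = a (n - 1) * a (n + 1) * aa / (a (n - 1) - a (n + 1))) ∧
      -- the further displayed coefficients of the expansions:
      ((∀ k, 2 ≤ |k - n| →
          (x k).coeff 1 = (1 - a k * b k) * (a (k + 1) - a (k - 1)) ∧
          (y k).coeff 1 = (1 - a k * b k) * (b (k + 1) - b (k - 1))) ∧
        (y (n + 1)).coeff 1 = -(ap / a (n - 1)) ∧
        (y (n - 1)).coeff 1 = -(am / a (n + 1)) ∧
        (y n).coeff 0 =
          (aa + (a (n + 1) * ap - a (n - 1) * am) / (a (n + 1) - a (n - 1))) /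
            (a (n - 1) - a (n + 1))) ∧
      -- uniqueness: any formal Laurent solution with the same characterizing data coincides
      -- with `(x, y)`:
      (∀ x' y' : ℤ → LaurentSeries F,
        (IsSolT x' y' ∧
          (∀ k, k ≠ n → BigO (x' k) 0 ∧ BigO (y' k) 0) ∧
          BigO (x' n) (-1) ∧ BigO (y' n) (-1) ∧
          (∀ k, 2 ≤ |k - n| → (x' k).coeff 0 = a k ∧ (y' k).coeff 0 = b k) ∧
          (x' (n + 1)).coeff 0 = a (n + 1) ∧ (x' (n - 1)).coeff 0 = a (n - 1) ∧
          (y' (n + 1)).coeff 0 = (a (n + 1))⁻¹ ∧ (y' (n - 1)).coeff 0 = (a (n - 1))⁻¹ ∧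
          (x' (n + 1)).coeff 1 = a (n + 1) * ap ∧ (x' (n - 1)).coeff 1 = a (n - 1) * am ∧
          (x' n).coeff (-1) = a (n - 1) * a (n + 1) / (a (n - 1) - a (n + 1)) ∧
          (y' n).coeff (-1) = -1 / (a (n - 1) - a (n + 1)) ∧
          (x' n).coeff 0 = a (n - 1) * a (n + 1) * aa / (a (n - 1) - a (n + 1))) →
        x' = x ∧ y' = y) := by
  obtain ⟨x, y, hxy, hnext, hunique⟩ :=
    (isLeadingBalance_leading hb1 hb2 hreg).exists_isPoleSolution (nextParam n aa ap am)
  refine ⟨x, y, (isPoleSolution_leading_iff hb1 hb2).mp hxy, ⟨fun k hk => ?_, ?_, ?_, ?_⟩,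
    fun x' y' h' => hunique x' y' ((isPoleSolution_leading_iff hb1 hb2).mpr h')⟩
  · have hk₁ := hnext k
    rwa [nextX_leading_of_two_le hk, nextY_leading_of_two_le hk,
      Pi.single_eq_of_ne (ne_of_two_le_abs_sub hk).1, Nat.cast_zero, sub_zero] at hk₁
  · simpa using (hnext (n + 1)).2.trans (nextY_leading_add_one hreg)
  · simpa using (hnext (n - 1)).2.trans (nextY_leading_sub_one hreg)
  · simpa using (hnext n).2.trans (nextY_leading_self hreg)
end
end

section
/- Let (x(t), y(t)) be a formal Laurent solution of the first Toeplitz vector field, let u(t) = (u_{−N},…,u_{−2},u_{−1}+t,u_1+t,u_2,…,u_N), and set Γ_k(t) := Γ_k(x(t),y(t);u(t)), Γ̃_k(t) := Γ̃_k(x(t),y(t);u(t)) and v_k(t) := 1 − x_k(t)y_k(t). Then for every k ∈ ℤ, as identities of formal Laurent series: dΓ_k/dt = v_k(Γ_{k+1} − Γ_{k−1}) + (x_{k+1} − x_{k−1})(x_kΓ̃_k − y_kΓ_k) and dΓ̃_k/dt = v_k(Γ̃_{k+1} − Γ̃_{k−1}) − (y_{k+1} − y_{k−1})(x_kΓ̃_k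 − y_kΓ_k). In the self-dual case (x_k = y_k, u_{−i} = u_i, u(t) = (u_1+t,u_2,…,u_N)) these equations specialize to dΓ_k/dt = v_k(Γ_{k+1} − Γ_{k−1}). Consequently, if (x(t), y(t)) is a formal power-series solution (no poles) with Γ_k(0) = Γ̃_k(0) = 0 for all k ∈ ℤ, then Γ_k(t) = Γ̃_k(t) = 0 identically in t. -/
/-!
Common definitions: the matrices `L₁`, `L₂` of the Toeplitz lattice, their powers,
the recursion polynomials `Γ_k` (here `GamA`), `Γ̃_k` (here `GamB`) and their
self-dual version (`GamSD`), together with the notion of formal Laurent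
solutions of the (self-dual) Toeplitz lattice.
-/

noncomputable section

open SingConf

/-!
Write `c_s(k)` for the coefficient of `u_{s+1}` in `Γ_k`. The powers of `L₁` satisfy a Lax equation
with a tridiagonal matrix, and it follows that `c_s`, paired with its counterpart in `Γ̃`, solves
the Toeplitz vector field linearized along `(x, y)`. The terms `k x_k`, `k y_k` miss being such a
solution by `-v_k (x_{k+1} + x_{k-1})`, and the `t`-dependence of `u_{±1}` makes up for exactly
this. So `(Γ, -Γ̃)` satisfies a homogeneous linear system, whose only power series solution with
zero initial value is zero.

Two symmetries leave only the coefficient of `u_{s+1}` in `Γ_k` to compute. Exchanging `x` with `y`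
and `u_i` with `u_{-i}` exchanges `Γ` with `Γ̃`. Transposition of `L₁` amounts to `k ↦ -k` together
with the exchange of `x` and `y`, and `k ↦ -k` reverses the sign of the vector field.
-/

namespace SingConf

section Powers

variable {A : Type*} [CommRing A] (x y : ℤ → A) (s : ℕ)

lemma L1e_eq_zero {i j : ℤ} (h : i + 1 < j) : L1e x y i j = 0 :=
  if_neg (by lia)

lemma L1e_add_one (i : ℤ) : L1e x y i (i + 1) = 1 - x i * y i := by
  simp [L1e, neg_add_eq_sub]

lemma L1e_of_le {i j : ℤ} (h : j ≤ i) : L1e x y i j = -(x i * y (j - 1)) := by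
  simp [L1e, show j ≤ i + 1 by lia, show i + 1 ≠ j by lia]

lemma L1pow_eq_zero {i j : ℤ} (h : i + s < j) : L1pow x y s i j = 0 := by
  cases s with
  | zero => exact if_neg (by lia)
  | succ s =>
    push_cast at h
    simp only [L1pow]
    rw [Finset.Icc_eq_empty (by lia), Finset.sum_empty]

lemma L1pow_succ_eq_sum {i j a b : ℤ} (ha : a ≤ j - 1) (hb : i + s ≤ b) :
    L1pow x y (s + 1) i j = ∑ l ∈ Finset.Icc a b, L1pow x y s i l * L1e x y l j := by
  refine Finset.sum_subset (Finset.Icc_subset_Icc ha hb) fun l _ hl ↦ ?_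
  rcases not_and_or.mp (Finset.mem_Icc.not.mp hl) with h | h
  · rw [L1e_eq_zero x y (by lia), mul_zero]
  · rw [L1pow_eq_zero x y s (by lia), zero_mul]

lemma L1pow_succ_eq_sum_left {i j a b : ℤ} (ha : a ≤ j - s) (hb : i + 1 ≤ b) :
    L1pow x y (s + 1) i j = ∑ l ∈ Finset.Icc a b, L1e x y i l * L1pow x y s l j := by
  induction s generalizing j with
  | zero =>
    rw [L1pow_succ_eq_sum x y 0 (min_le_left (j - 1) i) (le_max_left _ i)]
    simp only [L1pow, ite_mul, one_mul, zero_mul, mul_ite, mul_one, mul_zero, Finset.sum_ite_eq,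
      Finset.sum_ite_eq', Finset.mem_Icc]
    rw [if_pos (by lia)]
    split_ifs with h
    · rfl
    · exact L1e_eq_zero x y (by lia)
  | succ s ih =>
    push_cast at ha
    have hb' : i + (s + 1 : ℕ) ≤ b + s := by lia
    calc L1pow x y (s + 1 + 1) i j
        = ∑ m ∈ Finset.Icc (j - 1) (b + s), L1pow x y (s + 1) i m * L1e x y m j :=
          L1pow_succ_eq_sum x y (s + 1) le_rfl hb'
      _ = ∑ m ∈ Finset.Icc (j - 1) (b + s), ∑ l ∈ Finset.Icc a b,
            L1e x y i l * (L1pow x y s l m * L1e x y m j) := by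
          refine Finset.sum_congr rfl fun m hm ↦ ?_
          rw [Finset.mem_Icc] at hm
          simp only [ih (j := m) (by lia), Finset.sum_mul, mul_assoc]
      _ = ∑ l ∈ Finset.Icc a b, L1e x y i l * L1pow x y (s + 1) l j := by
          rw [Finset.sum_comm]
          refine Finset.sum_congr rfl fun l hl ↦ ?_
          rw [Finset.mem_Icc] at hl
          rw [L1pow_succ_eq_sum x y s le_rfl (show l + s ≤ b + s by lia), Finset.mul_sum]

lemma L2pow_eq_L1pow (i j : ℤ) : L2pow x y s i j = L1pow y x s j i := by
  induction s generalizing j with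
  | zero => simp only [L2pow, L1pow, eq_comm]
  | succ s ih =>
    rw [L1pow_succ_eq_sum_left y x s (le_refl (i - s)) le_rfl, L2pow]
    exact Finset.sum_congr rfl fun l _ ↦ by rw [ih, mul_comm]; rfl

/-- The sequence `k ↦ x_{-k}`. Reflection reverses the sign of the Toeplitz vector field and,
combined with the exchange of `x` and `y`, transposes `L₁` (reindexed by `i ↦ 1 - i`). -/
def reflect {B : Type*} (x : ℤ → B) (k : ℤ) : B := x (-k)

lemma reflect_reflect {B : Type*} (x : ℤ → B) : reflect (reflect x) = x :=
  funext fun k ↦ congrArg x (neg_neg k)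

lemma L1e_reflect (i j : ℤ) : L1e (reflect y) (reflect x) i j = L1e x y (1 - j) (1 - i) := by
  simp only [L1e, reflect, show 1 - i ≤ 1 - j + 1 ↔ j ≤ i + 1 by lia,
    show 1 - j + 1 = 1 - i ↔ i + 1 = j by lia, show -(j - 1) = 1 - j by lia,
    show 1 - i - 1 = -i by lia, mul_comm]

lemma L1pow_reflect (i j : ℤ) :
    L1pow (reflect y) (reflect x) s i j = L1pow x y s (1 - j) (1 - i) := by
  induction s generalizing j with
  | zero => simp only [L1pow, sub_right_inj, eq_comm]
  | succ s ih =>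
    rw [L1pow_succ_eq_sum_left x y s (le_refl (1 - i - s)) le_rfl, L1pow]
    refine Finset.sum_nbij' (1 - ·) (1 - ·) ?_ ?_ ?_ ?_ ?_
    · simp only [Finset.mem_Icc]; lia
    · simp only [Finset.mem_Icc]; lia
    · simp
    · simp
    · intro l _
      rw [ih, L1e_reflect, mul_comm]

/-- The tail `∑_{l ≥ j} x_l (L₁^s)_{i,l}` of the pairing of `x` with row `i` of `L₁^s`. -/
def L1tail (i j : ℤ) : A :=
  ∑ l ∈ Finset.Icc j (i + s), x l * L1pow x y s i l

lemma L1tail_eq_zero {i j : ℤ} (h : i + s < j) : L1tail x y s i j = 0 := by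
  rw [L1tail, Finset.Icc_eq_empty (by lia), Finset.sum_empty]

lemma L1tail_eq_add (i j : ℤ) :
    L1tail x y s i j = x j * L1pow x y s i j + L1tail x y s i (j + 1) := by
  rcases le_or_gt j (i + s) with h | h
  · rw [L1tail, L1tail, ← Finset.add_sum_Ioc_eq_sum_Icc h, Finset.Icc_add_one_left_eq_Ioc]
  · rw [L1tail_eq_zero x y s h, L1tail_eq_zero x y s (by lia), L1pow_eq_zero x y s h, mul_zero,
      add_zero]

lemma L1pow_succ_eq_sub_L1tail (i j : ℤ) :
    L1pow x y (s + 1) i j =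
      (1 - x (j - 1) * y (j - 1)) * L1pow x y s i (j - 1) - y (j - 1) * L1tail x y s i j := by
  have hab : j - 1 ≤ max (j - 1) (i + s) := le_max_left _ _
  have tail_eq : ∑ l ∈ Finset.Icc j (max (j - 1) (i + s)), L1pow x y s i l * L1e x y l j =
      -(y (j - 1) * L1tail x y s i j) := by
    rw [L1tail, Finset.mul_sum, ← Finset.sum_neg_distrib, eq_comm]
    refine (Finset.sum_congr rfl fun l hl ↦ ?_).trans
      (Finset.sum_subset (Finset.Icc_subset_Icc_right (le_max_right _ _)) fun l hl hl' ↦ ?_)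
    · rw [L1e_of_le x y (Finset.mem_Icc.mp hl).1]
      ring
    · rw [Finset.mem_Icc] at hl hl'
      rw [L1pow_eq_zero x y s (by lia), zero_mul]
  rw [L1pow_succ_eq_sum x y s le_rfl (le_max_right (j - 1) (i + s)),
    ← Finset.add_sum_Ioc_eq_sum_Icc hab, ← Finset.Icc_add_one_left_eq_Ioc, sub_add_cancel, tail_eq,
    ← sub_eq_add_neg]
  nth_rw 3 [← sub_add_cancel j 1]
  rw [L1e_add_one, mul_comm]

end Powers

section Lax

variable {R A : Type*} [CommRing R] [CommRing A] [Algebra R A]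

/-- The sequences `x`, `y` evolve under the derivation `D` by the first Toeplitz vector field. -/
structure IsToeplitzFlow (D : Derivation R A A) (x y : ℤ → A) : Prop where
  deriv_fst (k : ℤ) : D (x k) = (1 - x k * y k) * (x (k + 1) - x (k - 1))
  deriv_snd (k : ℤ) : D (y k) = (1 - x k * y k) * (y (k + 1) - y (k - 1))

/-- The commutator `[B, M]` with the tridiagonal matrix `B` of the Lax equation of the first
Toeplitz vector field: `B_{i,i+1} = v_i`, `B_{i,i} = x_{i-1} y_i`, `B_{i,i-1} = -1`. -/
def laxCommutator (x y : ℤ → A) (M : ℤ → ℤ → A) (i j : ℤ) : A :=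
  ((1 - x i * y i) * M (i + 1) j + x (i - 1) * y i * M i j - M (i - 1) j) -
    (M i (j - 1) * (1 - x (j - 1) * y (j - 1)) + M i j * (x (j - 1) * y j) - M i (j + 1))

variable {D : Derivation R A A} {x y : ℤ → A}

namespace IsToeplitzFlow

lemma symm (h : IsToeplitzFlow D x y) : IsToeplitzFlow D y x where
  deriv_fst k := by rw [h.deriv_snd, mul_comm (x k)]
  deriv_snd k := by rw [h.deriv_fst, mul_comm (x k)]

lemma neg_reflect (h : IsToeplitzFlow D x y) : IsToeplitzFlow (-D) (reflect x) (reflect y) where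
  deriv_fst k := by
    simp only [reflect, Derivation.neg_apply, h.deriv_fst, neg_add', neg_sub',
      sub_neg_eq_add]
    ring
  deriv_snd k := by
    simp only [reflect, Derivation.neg_apply, h.deriv_snd, neg_add', neg_sub',
      sub_neg_eq_add]
    ring

lemma deriv_one_sub_mul (h : IsToeplitzFlow D x y) (k : ℤ) :
    D (1 - x k * y k) = -((1 - x k * y k) *
      ((x (k + 1) - x (k - 1)) * y k + x k * (y (k + 1) - y (k - 1)))) := by
  simp only [map_sub, Derivation.map_one_eq_zero, Derivation.leibniz, h.deriv_fst, h.deriv_snd,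
    smul_eq_mul]
  ring

variable {s : ℕ}

lemma deriv_L1tail_of_lax (h : IsToeplitzFlow D x y)
    (lax : ∀ i j, D (L1pow x y s i j) = laxCommutator x y (L1pow x y s) i j) (i j : ℤ) :
    D (L1tail x y s i j) =
      (1 - x i * y i) * L1tail x y s (i + 1) j + x (i - 1) * y i * L1tail x y s i j
        - L1tail x y s (i - 1) j
        - x j * (1 - x (j - 1) * y (j - 1)) * L1pow x y s i (j - 1)
        - x (j - 1) * L1pow x y s i j := by
  obtain ⟨n, hn⟩ : ∃ n : ℕ, i + s + 2 ≤ j + n := ⟨(i + s + 2 - j).toNat, by lia⟩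
  induction n generalizing j with
  | zero =>
    rw [L1tail_eq_zero, L1tail_eq_zero, L1tail_eq_zero, L1pow_eq_zero, L1pow_eq_zero]
    · simp
    all_goals lia
  | succ n ih =>
    simp only [L1tail_eq_add x y s _ j, map_add, ih (j + 1) (by lia), Derivation.leibniz, lax,
      laxCommutator, h.deriv_fst, add_sub_cancel_right, smul_eq_mul]
    ring

theorem deriv_L1pow (h : IsToeplitzFlow D x y) (s : ℕ) (i j : ℤ) :
    D (L1pow x y s i j) = laxCommutator x y (L1pow x y s) i j := by
  induction s generalizing i j with
  | zero =>
    have deriv_ite : D (if i = j then 1 else 0) = 0 := by split_ifs <;> simp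
    simp only [L1pow, laxCommutator, deriv_ite]
    rcases eq_or_ne i j with rfl | hij
    · simp [show i ≠ i - 1 by lia]
    · by_cases hu : i + 1 = j
      · subst hu
        simp [show i - 1 ≠ i + 1 by lia, show i ≠ i + 1 + 1 by lia]
      · by_cases hl : i = j + 1
        · subst hl
          simp [show j + 1 + 1 ≠ j by lia, show j + 1 ≠ j - 1 by lia]
        · simp [hij, hu, hl, show i - 1 ≠ j by lia, show i ≠ j - 1 by lia]
  | succ s ih =>
    have tail_sub_one := L1tail_eq_add x y s i (j - 1)
    have tail_self := L1tail_eq_add x y s i j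
    rw [sub_add_cancel] at tail_sub_one
    simp only [laxCommutator, L1pow_succ_eq_sub_L1tail x y s, add_sub_cancel_right, map_sub,
      Derivation.leibniz, h.deriv_one_sub_mul, h.deriv_snd, h.deriv_L1tail_of_lax ih, ih,
      sub_add_cancel, smul_eq_mul]
    rw [tail_sub_one, tail_self]
    ring

end IsToeplitzFlow

end Lax

section Gamma

variable {A : Type*} [CommRing A]

/-- The coefficient of `u_{s+1}` in `Γ_k(x, y; u)`. -/
def gammaCoeff (x y : ℤ → A) (s : ℕ) (k : ℤ) : A :=
  (1 - x k * y k) * L1tail x y s (k + 1) k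

/-- The linearization of the `x`-component of the first Toeplitz vector field at `(x, y)`, in the
direction `(g, -h)`. The sign makes the equations for `(g, h)` and `(h, g)` symmetric under the
exchange of `x` and `y`. -/
def linearizedFlow (x y g h : ℤ → A) (k : ℤ) : A :=
  (1 - x k * y k) * (g (k + 1) - g (k - 1)) +
    (x (k + 1) - x (k - 1)) * (x k * h k - y k * g k)

lemma linearizedFlow_add (x y g g' h h' : ℤ → A) (k : ℤ) :
    linearizedFlow x y (g + g') (h + h') k =
      linearizedFlow x y g h k + linearizedFlow x y g' h' k := by
  simp only [linearizedFlow, Pi.add_apply]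
  ring

lemma linearizedFlow_sum {ι : Type*} (S : Finset ι) (a : ι → A) (x y : ℤ → A) (g h : ι → ℤ → A)
    (k : ℤ) :
    linearizedFlow x y (∑ i ∈ S, a i • g i) (∑ i ∈ S, a i • h i) k =
      ∑ i ∈ S, a i * linearizedFlow x y (g i) (h i) k := by
  simp only [linearizedFlow, Finset.sum_apply, Pi.smul_apply, smul_eq_mul, Finset.mul_sum,
    ← Finset.sum_sub_distrib, ← Finset.sum_add_distrib]
  exact Finset.sum_congr rfl fun i _ ↦ by ring

lemma linearizedFlow_reflect (x y g h : ℤ → A) (k : ℤ) :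
    linearizedFlow (reflect x) (reflect y) (reflect g) (reflect h) k =
      -linearizedFlow x y g h (-k) := by
  simp only [linearizedFlow, reflect, neg_add', neg_sub', sub_neg_eq_add]
  ring

lemma mul_L1tail_add_one_self (x y : ℤ → A) (s : ℕ) (k : ℤ) :
    y k * L1tail x y s (k + 1) k =
      L1pow x y s (k + 1) k - L1pow x y (s + 1) (k + 1) (k + 1) := by
  rw [L1pow_succ_eq_sub_L1tail, add_sub_cancel_right, L1tail_eq_add x y s (k + 1) k]
  ring

lemma mul_L1tail_reflect (x y : ℤ → A) (s : ℕ) (k : ℤ) :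
    x k * L1tail (reflect y) (reflect x) s (-k + 1) (-k) =
      L1pow x y s (k + 1) k - L1pow x y (s + 1) k k := by
  have key := mul_L1tail_add_one_self (reflect y) (reflect x) s (-k)
  simpa only [L1pow_reflect, reflect, neg_neg, neg_add_eq_sub, sub_sub_cancel, sub_neg_eq_add,
    add_comm (1 : ℤ)] using key

lemma L1pow_succ_add_one_self (x y : ℤ → A) (s : ℕ) (k : ℤ) :
    L1pow x y (s + 1) (k + 1) k =
      (1 - x (k + 1) * y (k + 1)) * L1pow x y s (k + 2) k -
        x (k + 1) * L1tail (reflect y) (reflect x) s (-k + 1) (-k) := by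
  have key := L1pow_succ_eq_sub_L1tail (reflect y) (reflect x) s (-k + 1) (-k)
  simp only [L1pow_reflect, reflect] at key
  ring_nf at key ⊢
  exact key

lemma gammaCoeff_zero (x y : ℤ → A) (k : ℤ) :
    gammaCoeff x y 0 k = (1 - x k * y k) * x (k + 1) := by
  rw [gammaCoeff, L1tail_eq_add, L1tail_eq_add, L1tail_eq_zero _ _ _ (by simp)]
  simp [L1pow]

lemma sum_mul_L2pow (x y : ℤ → A) (s : ℕ) (k : ℤ) :
    ∑ l ∈ Finset.Icc (k - s) (k + 1), x (l - 1) * L2pow x y s k l =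
      L1tail (reflect x) (reflect y) s (-k + 1) (-k) := by
  refine Finset.sum_nbij' (1 - ·) (1 - ·) ?_ ?_ ?_ ?_ ?_
  · simp only [Finset.mem_Icc]; lia
  · simp only [Finset.mem_Icc]; lia
  · simp
  · simp
  · intro l _
    simp [L1pow_reflect, L2pow_eq_L1pow, reflect]

lemma GamA_eq_sum (N : ℕ) (u x y : ℤ → A) :
    GamA N u x y =
      ∑ s ∈ Finset.range N, u (s + 1) • gammaCoeff x y s +
        ∑ s ∈ Finset.range N, u (-(s + 1)) • reflect (gammaCoeff (reflect x) (reflect y) s) +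
        fun k ↦ k * x k := by
  funext k
  simp only [GamA, ← Finset.Ico_add_one_right_eq_Icc 1 N, Finset.sum_Ico_eq_sum_range,
    Nat.add_sub_cancel]
  simp only [Nat.add_sub_cancel_left, Nat.cast_add, Nat.cast_one, add_comm (1 : ℤ),
    mul_add (1 - x k * y k), Finset.mul_sum (a := 1 - x k * y k), Pi.add_apply, Finset.sum_apply,
    Pi.smul_apply, smul_eq_mul, reflect, gammaCoeff, neg_neg]
  congr 2
  · refine Finset.sum_congr rfl fun s _ ↦ ?_
    rw [L1tail, add_right_comm k 1, ← add_assoc]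
    ring
  · refine Finset.sum_congr rfl fun s _ ↦ ?_
    rw [← sum_mul_L2pow, show k - (s + 1) + 1 = k - (s : ℤ) by ring]
    ring

lemma GamB_eq_GamA (N : ℕ) (u x y : ℤ → A) : GamB N u x y = GamA N (reflect u) y x := by
  funext k
  simp only [GamA, GamB, L2pow_eq_L1pow, reflect, neg_neg, mul_comm (y k) (x k)]
  rw [add_comm (∑ i ∈ _, _)]

lemma GamB_eq_sum (N : ℕ) (u x y : ℤ → A) :
    GamB N u x y =
      ∑ s ∈ Finset.range N, u (s + 1) • reflect (gammaCoeff (reflect y) (reflect x) s) +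
        ∑ s ∈ Finset.range N, u (-(s + 1)) • gammaCoeff y x s +
        fun k ↦ k * y k := by
  rw [GamB_eq_GamA, GamA_eq_sum, add_comm (∑ s ∈ _, _)]
  simp only [reflect, neg_neg]

variable {R : Type*} [CommRing R] [Algebra R A] {D : Derivation R A A} {x y u : ℤ → A}

namespace IsToeplitzFlow

theorem deriv_gammaCoeff (h : IsToeplitzFlow D x y) (s : ℕ) (k : ℤ) :
    D (gammaCoeff x y s k) =
      linearizedFlow x y (gammaCoeff x y s)
        (reflect (gammaCoeff (reflect y) (reflect x) s)) k := by
  have hy := mul_L1tail_add_one_self x y s (k - 1)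
  have hx := mul_L1tail_reflect x y s k
  have hpow := (L1pow_succ_eq_sub_L1tail x y s (k + 1) k).symm.trans
    (L1pow_succ_add_one_self x y s k)
  have tail_above := L1tail_eq_add x y s (k + 2) k
  have tail_below := L1tail_eq_add x y s k (k - 1)
  simp only [linearizedFlow, gammaCoeff, Derivation.leibniz, h.deriv_one_sub_mul,
    h.deriv_L1tail_of_lax (h.deriv_L1pow s), smul_eq_mul, reflect, neg_neg,
    add_sub_cancel_right, sub_add_cancel, add_assoc, one_add_one_eq_two] at *
  linear_combination (1 - x k * y k) * ((1 - x (k + 1) * y (k + 1)) * tail_above + tail_below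
    - x (k - 1) * hy + x (k - 1) * hx - x k * hpow)

lemma deriv_reflect_gammaCoeff (h : IsToeplitzFlow D x y) (s : ℕ) (k : ℤ) :
    D (reflect (gammaCoeff (reflect x) (reflect y) s) k) =
      linearizedFlow x y
        (reflect (gammaCoeff (reflect x) (reflect y) s))
        (gammaCoeff y x s) k := by
  have reflected := h.neg_reflect.deriv_gammaCoeff s (-k)
  rw [Derivation.neg_apply, reflect_reflect, reflect_reflect] at reflected
  rw [reflect, ← neg_inj, reflected]
  simpa only [reflect_reflect, neg_neg] using linearizedFlow_reflect x y
    (reflect (gammaCoeff (reflect x) (reflect y) s)) (gammaCoeff y x s) (-k)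

lemma deriv_intCast_mul (h : IsToeplitzFlow D x y) (k : ℤ) :
    D (k * x k) = linearizedFlow x y (fun k ↦ k * x k) (fun k ↦ k * y k) k -
      (1 - x k * y k) * (x (k + 1) + x (k - 1)) := by
  simp only [linearizedFlow, Derivation.leibniz, Derivation.map_intCast, h.deriv_fst, smul_eq_mul]
  push_cast
  ring

theorem deriv_GamA (h : IsToeplitzFlow D x y) {N : ℕ} (hN : 1 ≤ N)
    (hu : ∀ i, D (u i) = if i = 1 ∨ i = -1 then 1 else 0) (k : ℤ) :
    D (GamA N u x y k) = linearizedFlow x y (GamA N u x y) (GamB N u x y) k := by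
  have hpos (s : ℕ) : D (u (s + 1)) = if s = 0 then 1 else 0 := by
    rw [hu]; exact if_congr (by lia) rfl rfl
  have hneg (s : ℕ) : D (u (-(s + 1))) = if s = 0 then 1 else 0 := by
    rw [hu]; exact if_congr (by lia) rfl rfl
  have gammaCoeff_pos : gammaCoeff x y 0 k = (1 - x k * y k) * x (k + 1) := gammaCoeff_zero x y k
  have gammaCoeff_neg : reflect (gammaCoeff (reflect x) (reflect y) 0) k =
      (1 - x k * y k) * x (k - 1) := by
    simp [reflect, gammaCoeff_zero, sub_eq_neg_add]
  simp only [GamA_eq_sum, GamB_eq_sum, linearizedFlow_add, linearizedFlow_sum, Pi.add_apply,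
    Finset.sum_apply, Pi.smul_apply, smul_eq_mul, map_add, map_sum, Derivation.leibniz,
    Finset.sum_add_distrib, hpos, hneg, h.deriv_gammaCoeff, h.deriv_reflect_gammaCoeff,
    mul_ite, mul_one, mul_zero, Finset.sum_ite_eq', Finset.mem_range, Nat.lt_of_succ_le hN,
    if_true, gammaCoeff_pos, gammaCoeff_neg]
  have deriv_linear := h.deriv_intCast_mul k
  simp only [Derivation.leibniz, smul_eq_mul] at deriv_linear
  rw [deriv_linear]
  ring

theorem deriv_GamB (h : IsToeplitzFlow D x y) {N : ℕ} (hN : 1 ≤ N)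
    (hu : ∀ i, D (u i) = if i = 1 ∨ i = -1 then 1 else 0) (k : ℤ) :
    D (GamB N u x y k) = linearizedFlow y x (GamB N u x y) (GamA N u x y) k := by
  have hu_reflect (i : ℤ) : D (reflect u i) = if i = 1 ∨ i = -1 then 1 else 0 := by
    rw [reflect, hu]
    exact if_congr (by lia) rfl rfl
  simpa only [GamB_eq_GamA, reflect_reflect] using h.symm.deriv_GamA hN hu_reflect k

end IsToeplitzFlow

end Gamma

section Integrality

variable {A S : Type*} [CommRing A] [SetLike S A] [SubringClass S A] {B : S} {x y u : ℤ → A}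

lemma L1pow_mem (hx : ∀ k, x k ∈ B) (hy : ∀ k, y k ∈ B) (s : ℕ) (i j : ℤ) :
    L1pow x y s i j ∈ B := by
  induction s generalizing j with
  | zero => simp only [L1pow]; split_ifs <;> aesop
  | succ s ih =>
    refine sum_mem fun l _ ↦ mul_mem (ih l) ?_
    rw [L1e]
    split_ifs <;> aesop

lemma gammaCoeff_mem (hx : ∀ k, x k ∈ B) (hy : ∀ k, y k ∈ B) (s : ℕ) (k : ℤ) :
    gammaCoeff x y s k ∈ B :=
  mul_mem (sub_mem (one_mem B) (mul_mem (hx k) (hy k)))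
    (sum_mem fun l _ ↦ mul_mem (hx l) (L1pow_mem hx hy s _ l))

lemma GamA_mem (hu : ∀ i, u i ∈ B) (hx : ∀ k, x k ∈ B) (hy : ∀ k, y k ∈ B) (N : ℕ) (k : ℤ) :
    GamA N u x y k ∈ B := by
  simp only [GamA_eq_sum, Pi.add_apply, Finset.sum_apply, Pi.smul_apply, smul_eq_mul]
  refine add_mem (add_mem (sum_mem fun s _ ↦ mul_mem (hu _) ?_)
    (sum_mem fun s _ ↦ mul_mem (hu _) ?_)) (mul_mem (intCast_mem B k) (hx k))
  · exact gammaCoeff_mem hx hy s k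
  · exact gammaCoeff_mem (fun _ ↦ hx _) (fun _ ↦ hy _) s (-k)

lemma GamB_mem (hu : ∀ i, u i ∈ B) (hx : ∀ k, x k ∈ B) (hy : ∀ k, y k ∈ B) (N : ℕ) (k : ℤ) :
    GamB N u x y k ∈ B := by
  rw [GamB_eq_GamA]
  exact GamA_mem (fun _ ↦ hu _) hy hx N k

lemma valuation_linearizedFlow_le {Γ₀ : Type*} [LinearOrderedCommGroupWithZero Γ₀]
    {v : Valuation A Γ₀} (hx : ∀ k, x k ∈ v.integer) (hy : ∀ k, y k ∈ v.integer)
    {g h : ℤ → A} {c : Γ₀} (hg : ∀ k, v (g k) ≤ c) (hh : ∀ k, v (h k) ≤ c) (k : ℤ) :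
    v (linearizedFlow x y g h k) ≤ c := by
  have mul_le {a b : A} (ha : a ∈ v.integer) (hb : v b ≤ c) : v (a * b) ≤ c := by
    rw [map_mul]
    exact mul_le_of_le_one_of_le ha hb
  refine v.map_add_le (mul_le ?_ (v.map_sub_le (hg _) (hg _))) (mul_le ?_ (v.map_sub_le ?_ ?_))
  · exact sub_mem (one_mem _) (mul_mem (hx k) (hy k))
  · exact sub_mem (hx _) (hx _)
  · exact mul_le (hx k) (hh k)
  · exact mul_le (hy k) (hg k)

end Integrality

section SelfDual

variable {A : Type*} [CommRing A]

lemma GamB_eq_GamA_of_selfDual {u : ℤ → A} (hu : reflect u = u) (N : ℕ) (x : ℤ → A) :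
    GamB N u x x = GamA N u x x := by
  rw [GamB_eq_GamA, hu]

lemma linearizedFlow_selfDual (x g : ℤ → A) (k : ℤ) :
    linearizedFlow x x g g k = (1 - x k * x k) * (g (k + 1) - g (k - 1)) := by
  rw [linearizedFlow, sub_self, mul_zero, add_zero]

end SelfDual

section LaurentDerivation

open HahnSeries LaurentSeries

variable {R : Type*} [CommRing R]

/-- The algebra structure by constant series. Being the most recent instance, it is preferred to
`HahnSeries.powerSeriesAlgebra`, whose scalar action is not definitionally the one for which
`LaurentSeries.derivative` is linear. -/
instance laurentAlgebra : Algebra R R⸨X⸩ := HahnSeries.instAlgebra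

lemma coeff_derivative (f : R⸨X⸩) (m : ℤ) :
    (derivative R f).coeff m = (m + 1 : ℤ) * f.coeff (m + 1) := by
  simp [derivative_apply, hasseDeriv_coeff]

lemma coeff_single_one_mul_derivative (f : R⸨X⸩) (m : ℤ) :
    (single 1 1 * derivative R f).coeff m = m * f.coeff m := by
  rw [coeff_single_mul, coeff_derivative, sub_add_cancel, one_mul]

lemma isUnit_single_one : IsUnit (single (1 : ℤ) (1 : R)) :=
  .of_mul_eq_one (single (-1) 1) (by simp)

/-- The derivation `t d/dt` multiplies the coefficient of `t^m` by `m`, so it satisfies the Leibniz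
rule because degrees add. -/
lemma derivative_mul (f g : R⸨X⸩) :
    derivative R (f * g) = f * derivative R g + g * derivative R f := by
  have support_subset (f : R⸨X⸩) : (single 1 1 * derivative R f).support ⊆ f.support := by
    intro m hm
    rw [mem_support, coeff_single_one_mul_derivative] at hm
    exact right_ne_zero_of_mul hm
  refine isUnit_single_one.mul_left_cancel (HahnSeries.ext (funext fun m ↦ ?_))
  rw [mul_add, mul_left_comm, mul_left_comm _ g, mul_comm g, coeff_single_one_mul_derivative,
    coeff_add, coeff_mul_right' g.isPWO_support (support_subset g),
    coeff_mul_left' f.isPWO_support (support_subset f), coeff_mul, Finset.mul_sum,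
    ← Finset.sum_add_distrib]
  refine Finset.sum_congr rfl fun ij hij ↦ ?_
  rw [coeff_single_one_mul_derivative, coeff_single_one_mul_derivative,
    ← (Finset.mem_antidiagonal.mp hij).2.2]
  push_cast
  ring

variable (R) in
/-- The derivation `d/dt` of the ring of formal Laurent series in `t`. -/
def laurentDerivation : Derivation R R⸨X⸩ R⸨X⸩ :=
  .mk' (derivative R) derivative_mul

lemma coeff_laurentDerivation (f : R⸨X⸩) (m : ℤ) :
    (laurentDerivation R f).coeff m = (m + 1 : ℤ) * f.coeff (m + 1) :=
  coeff_derivative f m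

lemma laurentDerivation_C (c : R) : laurentDerivation R (C c) = 0 :=
  (laurentDerivation R).map_algebraMap c

lemma laurentDerivation_single_one : laurentDerivation R (single 1 1) = 1 := by
  ext m
  rw [coeff_laurentDerivation, coeff_one, coeff_single]
  split_ifs <;> first | lia | simp_all

lemma laurentDerivation_C_add_ite (c : R) (p : Prop) [Decidable p] :
    laurentDerivation R (C c + if p then single 1 1 else 0) = if p then 1 else 0 := by
  rw [map_add, laurentDerivation_C, zero_add, apply_ite (laurentDerivation R),
    laurentDerivation_single_one, map_zero]

variable {F : Type*} [Field F]

lemma isToeplitzFlow_of_isSolT {x y : ℤ → F⸨X⸩} (h : IsSolT x y) :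
    IsToeplitzFlow (laurentDerivation F) x y where
  deriv_fst k := by ext m; rw [coeff_laurentDerivation, (h k m).1]
  deriv_snd k := by ext m; rw [coeff_laurentDerivation, (h k m).2]

lemma bigO_iff_valuation_le {f : F⸨X⸩} {m : ℤ} :
    BigO f m ↔ Valued.v f ≤ WithZero.exp (-m) :=
  (valuation_le_iff_coeff_lt_eq_zero F).symm

lemma bigO_zero_iff_mem_integer {f : F⸨X⸩} : BigO f 0 ↔ f ∈ Valued.v.integer := by
  rw [bigO_iff_valuation_le, neg_zero, WithZero.exp_zero, Valuation.mem_integer_iff]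

lemma C_add_ite_mem_integer (c : F) (p : Prop) [Decidable p] :
    C c + (if p then single 1 1 else 0) ∈ (Valued.v : Valuation F⸨X⸩ _).integer := by
  rw [← bigO_zero_iff_mem_integer]
  intro i hi
  rw [coeff_add, C_apply, coeff_single_of_ne hi.ne, zero_add]
  split_ifs
  · exact coeff_single_of_ne (by lia)
  · rfl

variable [CharZero F]

lemma bigO_succ_of_bigO_laurentDerivation {f : F⸨X⸩} {n : ℕ} (h₀ : f.coeff 0 = 0)
    (h : BigO (laurentDerivation F f) n) : BigO f (n + 1) := by
  intro i hi
  rcases eq_or_ne i 0 with rfl | hi₀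
  · exact h₀
  · have coeff_eq := h (i - 1) (by lia)
    rw [coeff_laurentDerivation, sub_add_cancel] at coeff_eq
    exact (mul_eq_zero_iff_left (Int.cast_ne_zero.mpr hi₀)).mp coeff_eq

/-- Each order of vanishing of a solution of a linear differential system without poles forces the
next one. -/
lemma eq_zero_of_laurentDerivation_bigO {ι : Type*} {g : ι → F⸨X⸩} (hg : ∀ i, BigO (g i) 0)
    (hg₀ : ∀ i, (g i).coeff 0 = 0)
    (hD : ∀ n : ℕ, (∀ i, BigO (g i) n) → ∀ i, BigO (laurentDerivation F (g i)) n) (i : ι) :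
    g i = 0 := by
  have bigO (n : ℕ) : ∀ i, BigO (g i) n := by
    induction n with
    | zero => exact hg
    | succ n ih =>
      intro i
      exact_mod_cast bigO_succ_of_bigO_laurentDerivation (hg₀ i) (hD n ih i)
  ext m
  exact bigO (m + 1).toNat i m (by lia)

theorem eq_zero_of_linearizedFlow {x y g h : ℤ → F⸨X⸩} (hx : ∀ k, BigO (x k) 0)
    (hy : ∀ k, BigO (y k) 0) (hg : ∀ k, BigO (g k) 0) (hh : ∀ k, BigO (h k) 0)
    (hg₀ : ∀ k, (g k).coeff 0 = 0) (hh₀ : ∀ k, (h k).coeff 0 = 0)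
    (hDg : ∀ k, laurentDerivation F (g k) = linearizedFlow x y g h k)
    (hDh : ∀ k, laurentDerivation F (h k) = linearizedFlow y x h g k) (k : ℤ) :
    g k = 0 ∧ h k = 0 := by
  simp only [bigO_zero_iff_mem_integer] at hx hy
  have eq_zero : ∀ i, Sum.elim g h i = 0 := by
    refine eq_zero_of_laurentDerivation_bigO (Sum.forall.mpr ⟨hg, hh⟩) (Sum.forall.mpr ⟨hg₀, hh₀⟩)
      fun n hn ↦ ?_
    simp only [bigO_iff_valuation_le, Sum.forall, Sum.elim_inl, Sum.elim_inr, hDg, hDh] at hn ⊢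
    exact ⟨valuation_linearizedFlow_le hx hy hn.1 hn.2, valuation_linearizedFlow_le hy hx hn.2 hn.1⟩
  exact ⟨eq_zero (.inl k), eq_zero (.inr k)⟩

end LaurentDerivation

end SingConf

/-- Let `(x(t), y(t))` be a formal Laurent solution of the first Toeplitz
vector field and let `u(t) = (u_{-N},…,u_{-1}+t, u_1+t,…,u_N)`. Then the series
`Γ_k(t) := Γ_k(x(t),y(t);u(t))` and `Γ̃_k(t) := Γ̃_k(x(t),y(t);u(t))` satisfy
`Γ̇_k = v_k(Γ_{k+1} - Γ_{k-1}) + (x_{k+1} - x_{k-1})(x_kΓ̃_k - y_kΓ_k)` and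
`Γ̇̃_k = v_k(Γ̃_{k+1} - Γ̃_{k-1}) - (y_{k+1} - y_{k-1})(x_kΓ̃_k - y_kΓ_k)`
(stated coefficientwise); in the self-dual case these specialize to
`Γ̇_k = v_k(Γ_{k+1} - Γ_{k-1})`; and if the solution is a power-series solution with
`Γ_k(0) = Γ̃_k(0) = 0` for all `k`, then `Γ_k(t) = Γ̃_k(t) = 0` identically. -/
theorem statement4 (F : Type*) [Field F] [CharZero F] (N : ℕ) (hN : 1 ≤ N)
    (u : ℤ → F) (huN : u (N : ℤ) ≠ 0) (huN' : u (-(N : ℤ)) ≠ 0)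
    (x y : ℤ → LaurentSeries F) (hsol : IsSolT x y)
    -- the time-dependent parameters u(t):
    (ut : ℤ → LaurentSeries F)
    (hut : ∀ i : ℤ, ut i = HahnSeries.C (u i) +
      (if i = 1 ∨ i = -1 then HahnSeries.single (1 : ℤ) (1 : F) else 0))
    -- Γ_k(t) and Γ̃_k(t):
    (G Gt : ℤ → LaurentSeries F)
    (hG : ∀ k, G k = GamA N ut x y k) (hGt : ∀ k, Gt k = GamB N ut x y k) :
    -- (a) the differential equations:
    (∀ k m : ℤ,
      ((m + 1 : ℤ) : F) * (G k).coeff (m + 1) =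
        ((1 - x k * y k) * (G (k + 1) - G (k - 1)) +
          (x (k + 1) - x (k - 1)) * (x k * Gt k - y k * G k)).coeff m ∧
      ((m + 1 : ℤ) : F) * (Gt k).coeff (m + 1) =
        ((1 - x k * y k) * (Gt (k + 1) - Gt (k - 1)) -
          (y (k + 1) - y (k - 1)) * (x k * Gt k - y k * G k)).coeff m) ∧
    -- (b) the self-dual specialization:
    ((∀ k, x k = y k) → (∀ i : ℤ, u (-i) = u i) →
      ∀ k m : ℤ, ((m + 1 : ℤ) : F) * (G k).coeff (m + 1) =
        ((1 - x k * y k) * (G (k + 1) - G (k - 1))).coeff m) ∧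
    -- (c) power-series solutions starting on the invariant manifold stay on it:
    ((∀ k, BigO (x k) 0 ∧ BigO (y k) 0) →
      (∀ k, (G k).coeff 0 = 0 ∧ (Gt k).coeff 0 = 0) →
      ∀ k, G k = 0 ∧ Gt k = 0) := by
  have flow := isToeplitzFlow_of_isSolT hsol
  have deriv_ut (i : ℤ) : laurentDerivation F (ut i) = if i = 1 ∨ i = -1 then 1 else 0 := by
    rw [hut, laurentDerivation_C_add_ite]
  obtain rfl : G = GamA N ut x y := funext hG
  obtain rfl : Gt = GamB N ut x y := funext hGt
  have deriv_G := flow.deriv_GamA hN deriv_ut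
  have deriv_Gt := flow.deriv_GamB hN deriv_ut
  simp only [← coeff_laurentDerivation, deriv_G, deriv_Gt]
  refine ⟨fun k m ↦ ⟨rfl, ?_⟩, fun hxy hu k m ↦ ?_, fun hxy hΓ₀ ↦ ?_⟩
  · rw [linearizedFlow]
    ring_nf
  · obtain rfl : x = y := funext hxy
    have hut_symm : reflect ut = ut := funext fun i ↦ by
      rw [reflect, hut, hut, hu]
      exact congrArg _ (if_congr (by lia) rfl rfl)
    rw [GamB_eq_GamA_of_selfDual hut_symm, linearizedFlow_selfDual]
  · have hut_mem (i : ℤ) := hut i ▸ C_add_ite_mem_integer (u i) (i = 1 ∨ i = -1)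
    have hx_mem (k : ℤ) := bigO_zero_iff_mem_integer.mp (hxy k).1
    have hy_mem (k : ℤ) := bigO_zero_iff_mem_integer.mp (hxy k).2
    exact eq_zero_of_linearizedFlow (fun k ↦ (hxy k).1) (fun k ↦ (hxy k).2)
      (fun k ↦ bigO_zero_iff_mem_integer.mpr (GamA_mem hut_mem hx_mem hy_mem N k))
      (fun k ↦ bigO_zero_iff_mem_integer.mpr (GamB_mem hut_mem hx_mem hy_mem N k))
      (fun k ↦ (hΓ₀ k).1) (fun k ↦ (hΓ₀ k).2) deriv_G deriv_Gt
end
end
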